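/- arXiv:1212.0106 — 13 statements merged into one kernel-verified Lean document; each statement's English description precedes it below -/
import Mathlib

section
/- Let F be a CNF formula over V, let U ⊆ V, and let π : V → Bool be an autarky on U. Let γ : V → Bool be an arbitrary assignment and define τ : V → Bool by τ v = π v for v ∈ U and τ v = γ v for v ∉ U. Then sat_τ(F) = |F_U| + sat_γ(F ∖ F_U). -/
/-!
The indices satisfied by `τ` are the disjoint union of `F_U` and the indices outside `F_U`
satisfied by `γ`. Every clause of `F_U` is satisfied by `τ`, since the autarky `π` already
satisfies it through a variable of `U`, where `τ = π`. A clause avoiding `U` contains only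
variables on which `τ = γ`, so `τ` satisfies it exactly when `γ` does.
-/

open scoped Classical

/-- A truth assignment `τ` satisfies a clause `c` (a finite set of literals `(v, b)`)
if some literal `(v, b) ∈ c` has `τ v = b`. -/
def Satisfies {V : Type*} (τ : V → Bool) (c : Finset (V × Bool)) : Prop :=
  ∃ l ∈ c, τ l.1 = l.2

/-- `satCount F τ` is the number of indices whose clause is satisfied by `τ`. -/
noncomputable def satCount {V I : Type*} [Fintype I]
    (F : I → Finset (V × Bool)) (τ : V → Bool) : ℕ :=
  (Finset.univ.filter fun i => Satisfies τ (F i)).card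

/-- `satMax F` is the maximum of `satCount F τ` over all assignments `τ`. -/
noncomputable def satMax {V I : Type*} [Fintype V] [Fintype I]
    (F : I → Finset (V × Bool)) : ℕ :=
  Finset.univ.sup fun τ : V → Bool => satCount F τ

/-- `M` is a matching of the formula `F`: each pair `(v, i) ∈ M` has variable `v`
occurring in clause `F i`, and the pairs have pairwise distinct variables and
pairwise distinct indices. -/
def IsMatching {V I : Type*} (F : I → Finset (V × Bool)) (M : Finset (V × I)) : Prop :=
  (∀ p ∈ M, ∃ b, (p.1, b) ∈ F p.2) ∧
  ∀ p ∈ M, ∀ q ∈ M, p ≠ q → p.1 ≠ q.1 ∧ p.2 ≠ q.2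

/-- The matching number `ν(F)`: the largest size of a matching of `F`. -/
noncomputable def matchNum {V I : Type*} [Fintype V] [Fintype I]
    (F : I → Finset (V × Bool)) : ℕ :=
  (Finset.univ.filter fun M : Finset (V × I) => IsMatching F M).sup Finset.card

/-- Autarky lemma: if `π` is an autarky on `U` and `τ` agrees with `π` on `U` and
with `γ` off `U`, then `sat_τ(F) = |F_U| + sat_γ(F ∖ F_U)`. -/
theorem stmt2 {V I : Type*} [Fintype V] [Fintype I] (F : I → Finset (V × Bool))
    (hne : ∀ i, (F i).Nonempty)
    (hone : ∀ i v b b', (v, b) ∈ F i → (v, b') ∈ F i → b = b')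
    (U : Finset V) (π γ τ : V → Bool)
    (haut : ∀ i : I, (∃ l ∈ F i, l.1 ∈ U) → ∃ l ∈ F i, l.1 ∈ U ∧ π l.1 = l.2)
    (hτ : ∀ v, τ v = if v ∈ U then π v else γ v) :
    satCount F τ =
      (Finset.univ.filter fun i : I => ∃ l ∈ F i, l.1 ∈ U).card +
      (Finset.univ.filter fun i : I => (¬ ∃ l ∈ F i, l.1 ∈ U) ∧ Satisfies γ (F i)).card := by
  classical
  rw [satCount, ← Finset.card_union_of_disjoint]
  · congr 1
    ext i
    simp only [Finset.mem_filter, Finset.mem_univ, true_and, Finset.mem_union]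
    by_cases h : ∃ l ∈ F i, l.1 ∈ U
    · obtain ⟨l, hl, hU, hπ⟩ := haut i h
      have hs : Satisfies τ (F i) := ⟨l, hl, by rw [hτ, if_pos hU, hπ]⟩
      exact iff_of_true hs (Or.inl h)
    · have hγ : ∀ l ∈ F i, τ l.1 = γ l.1 := fun l hl => by
        rw [hτ, if_neg fun hU => h ⟨l, hl, hU⟩]
      have hs : Satisfies τ (F i) ↔ Satisfies γ (F i) :=
        exists_congr fun l => and_congr_right fun hl => by rw [hγ l hl]
      rw [hs]
      exact ⟨fun hi => Or.inr ⟨h, hi⟩, fun hi => hi.elim (fun hU => absurd hU h) And.right⟩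
  · exact Finset.disjoint_filter.2 fun i _ h h' => h'.1 h
end

section
/- Let F be a CNF formula and x a variable with n(x) = 0, i.e., no clause of F contains the positive literal (x, true). Let F' be the subfamily of F consisting of those indices whose clause does not contain the literal (x, false). Then sat(F) = sat(F') + n(x̄). -/
/-!
Setting `x` to `false` costs nothing: no clause contains the positive literal of `x`, so every clause
satisfied by `τ` stays satisfied, and every clause containing `x̄` becomes satisfied. For any `τ`, the
clauses of `F` satisfied by `τ` split into those of `F'` and those containing `x̄`
(`satCount_split`). The second part has at most `n(x̄)` elements, which gives `≤`; an optimal assignment for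
`F'`, updated to send `x` to `false`, attains the bound, which gives `≥`.
-/

open scoped Classical

theorem satCount_split {V I : Type*} [Fintype I] (F : I → Finset (V × Bool)) (x : V)
    (τ : V → Bool) :
    satCount F τ =
      satCount (fun i : {i : I // (x, false) ∉ F i} => F i.1) τ +
      (Finset.univ.filter fun i : I => (x, false) ∈ F i ∧ Satisfies τ (F i)).card := by
  have h : satCount (fun i : {i : I // (x, false) ∉ F i} => F i.1) τ =
      (Finset.univ.filter fun i : I => (x, false) ∉ F i ∧ Satisfies τ (F i)).card := by
    unfold satCount
    refine Finset.card_bij (fun i _ => i.1) ?_ ?_ ?_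
    · intro i hi
      simpa [i.2] using hi
    · intro i _ j _ hij
      exact Subtype.ext hij
    · intro i hi
      obtain ⟨h1, h2⟩ := (Finset.mem_filter.mp hi).2
      exact ⟨⟨i, h1⟩, by simpa using h2, rfl⟩
  rw [h, satCount, ← Finset.card_union_of_disjoint]
  · congr 1
    ext i
    simp only [Finset.mem_filter, Finset.mem_union, Finset.mem_univ, true_and]
    tauto
  · rw [Finset.disjoint_left]
    intro i hi hi'
    exact (Finset.mem_filter.mp hi).2.1 (Finset.mem_filter.mp hi').2.1

/-- If the clause does not contain the positive literal of `x`, resetting `x` to `false` keeps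
it satisfied. -/
theorem Satisfies.update_false {V : Type*} {τ : V → Bool} {c : Finset (V × Bool)} {x : V}
    (hx : (x, true) ∉ c) (h : Satisfies τ c) : Satisfies (Function.update τ x false) c := by
  obtain ⟨⟨v, b⟩, hl, hv⟩ := h
  refine ⟨(v, b), hl, ?_⟩
  by_cases hvx : v = x
  · subst hvx
    cases b
    · simp
    · exact absurd hl hx
  · simpa [Function.update_of_ne hvx] using hv

/-- Reduction Rule 1: if no clause contains the positive literal `(x, true)`, and `F'`
is the subfamily of clauses not containing `(x, false)`, then `sat(F) = sat(F') + n(x̄)`. -/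
theorem stmt3 {V I : Type*} [Fintype V] [Fintype I] (F : I → Finset (V × Bool))
    (hne : ∀ i, (F i).Nonempty)
    (hone : ∀ i v b b', (v, b) ∈ F i → (v, b') ∈ F i → b = b')
    (x : V) (hx : ∀ i, (x, true) ∉ F i) :
    satMax F =
      satMax (fun i : {i : I // (x, false) ∉ F i} => F i.1) +
      (Finset.univ.filter fun i : I => (x, false) ∈ F i).card := by
  apply le_antisymm
  · refine Finset.sup_le fun τ _ => ?_
    rw [satCount_split F x τ]
    refine add_le_add (Finset.le_sup (f := fun τ : V → Bool =>
      satCount (fun i : {i : I // (x, false) ∉ F i} => F i.1) τ) (Finset.mem_univ τ)) ?_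
    refine Finset.card_le_card fun i hi => ?_
    simp only [Finset.mem_filter, Finset.mem_univ, true_and] at hi ⊢
    exact hi.1
  · obtain ⟨τ, -, hτ⟩ := Finset.exists_mem_eq_sup Finset.univ Finset.univ_nonempty
      (fun τ : V → Bool => satCount (fun i : {i : I // (x, false) ∉ F i} => F i.1) τ)
    refine le_trans ?_ (Finset.le_sup (f := fun τ : V → Bool => satCount F τ)
      (Finset.mem_univ (Function.update τ x false)))
    rw [satCount_split F x, satMax, hτ]
    refine add_le_add ?_ ?_ <;> refine Finset.card_le_card fun i hi => ?_ <;>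
      simp only [Finset.mem_filter, Finset.mem_univ, true_and] at hi ⊢
    · exact hi.update_false (hx i.1)
    · exact ⟨hi, (x, false), hi, by simp⟩
end

section
/- Let F be a CNF formula and x a variable with n(x) = n(x̄) = 1; let i' and i'' be the (necessarily distinct) indices of the clauses c' and c'' containing the literals (x, true) and (x, false) respectively. Let c* = (c' ∖ {(x, true)}) ∪ (c'' ∖ {(x, false)}), and let F' be the formula obtained from F by deleting the indices i' and i'' and adding one new index carrying the clause c* (c* may be empty; an empty clause is satisfied by no assignment). Then sat(F) = sat(F') + 1. -/
/-!
Compare, for a single assignment, the contribution of the two clauses `c'`, `c''` containing `x`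
to `satCount` with that of the clause `c*` replacing them; all other clauses avoid `x` and are
common to both formulas.

For every `τ`, one of `c'`, `c''` has its `x`-literal falsified, so if both are satisfied then a
literal of `c*` is true: passing to the new formula loses at most one satisfied clause
(`satCount_le_resolvent`). Conversely, changing `τ` only at `x` affects neither the common
clauses nor `c*`. The value at `x` can be chosen to satisfy one of `c'`, `c''`, and if `τ`
satisfies `c*` it can be chosen so that the other one is satisfied by its literal in `c*`: one more
clause is gained (`exists_satCount_ge_resolvent`). Taking maxima gives the equality.
-/

open scoped Classical

/-- The formula obtained from `F` by replacing the clauses at `i'` and `i''` by the single clause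
`(F i' ∖ {(x, true)}) ∪ (F i'' ∖ {(x, false)})`. -/
noncomputable abbrev resolventFormula {V I : Type*} (F : I → Finset (V × Bool))
    (x : V) (i' i'' : I) : {i : I // i ≠ i' ∧ i ≠ i''} ⊕ Unit → Finset (V × Bool) :=
  Sum.elim (fun i => F i.1) fun _ => (F i' \ {(x, true)}) ∪ (F i'' \ {(x, false)})

/-- The number of clauses other than those at `i'` and `i''` that `τ` satisfies. -/
noncomputable def restCount {V I : Type*} [Fintype I] (F : I → Finset (V × Bool))
    (i' i'' : I) (τ : V → Bool) : ℕ :=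
  ∑ i : {i : I // i ≠ i' ∧ i ≠ i''}, if Satisfies τ (F i.1) then 1 else 0

lemma satCount_eq_rest {V I : Type*} [Fintype I] (F : I → Finset (V × Bool))
    (i' i'' : I) (hii : i' ≠ i'') (τ : V → Bool) :
    satCount F τ = restCount F i' i'' τ +
      ((if Satisfies τ (F i') then 1 else 0) + (if Satisfies τ (F i'') then 1 else 0)) := by
  rw [satCount, restCount, Finset.card_filter,
    ← Finset.sum_subtype (Finset.univ \ {i', i''}) (by simp)
      (fun i => if Satisfies τ (F i) then 1 else 0),
    ← Finset.sum_pair (f := fun i => if Satisfies τ (F i) then 1 else 0) hii]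
  exact (Finset.sum_sdiff (Finset.subset_univ _)).symm

lemma satCount_resolvent {V I : Type*} [Fintype I] (F : I → Finset (V × Bool))
    (x : V) (i' i'' : I) (τ : V → Bool) :
    satCount (resolventFormula F x i' i'') τ = restCount F i' i'' τ +
      (if Satisfies τ ((F i' \ {(x, true)}) ∪ (F i'' \ {(x, false)})) then 1 else 0) := by
  rw [satCount, restCount, Finset.card_filter, Fintype.sum_sum_type,
    Fintype.sum_unique (ι := Unit)]
  rfl

lemma satisfies_update_iff {V : Type*} (c : Finset (V × Bool)) (x : V)
    (hx : ∀ b, (x, b) ∉ c) (τ : V → Bool) (b : Bool) :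
    Satisfies (Function.update τ x b) c ↔ Satisfies τ c := by
  refine exists_congr fun l => and_congr_right fun hl => ?_
  have hlx : l.1 ≠ x := fun h => hx l.2 (h ▸ hl)
  rw [Function.update_of_ne hlx]

lemma satCount_le_resolvent {V I : Type*} [Fintype I] (F : I → Finset (V × Bool))
    (x : V) (i' i'' : I) (hii : i' ≠ i'') (τ : V → Bool) :
    satCount F τ ≤ satCount (resolventFormula F x i' i'') τ + 1 := by
  rw [satCount_eq_rest F i' i'' hii, satCount_resolvent]
  have key : Satisfies τ (F i') → Satisfies τ (F i'') →
      Satisfies τ ((F i' \ {(x, true)}) ∪ (F i'' \ {(x, false)})) := by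
    rintro ⟨l, hl, hτl⟩ ⟨m, hm, hτm⟩
    by_cases hlx : l = (x, true)
    · -- Here `τ x = true`, so the literal satisfying `F i''` is not `(x, false)`.
      refine ⟨m, ?_, hτm⟩
      have : m ≠ (x, false) := by
        rintro rfl
        simp_all
      simp [hm, this]
    · exact ⟨l, by simp [hl, hlx], hτl⟩
  split_ifs <;> first | omega | (exfalso; tauto)

lemma exists_satCount_ge_resolvent {V I : Type*} [Fintype I] (F : I → Finset (V × Bool))
    (x : V) (i' i'' : I) (hii : i' ≠ i'')
    (hpos : ∀ i, (x, true) ∈ F i ↔ i = i') (hneg : ∀ i, (x, false) ∈ F i ↔ i = i'')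
    (τ : V → Bool) :
    ∃ σ : V → Bool, satCount (resolventFormula F x i' i'') τ + 1 ≤ satCount F σ := by
  have hrest : ∀ b, restCount F i' i'' (Function.update τ x b) = restCount F i' i'' τ := by
    intro b
    refine Finset.sum_congr rfl fun i _ => ?_
    have hx : ∀ b, (x, b) ∉ F i.1 := by
      intro b
      cases b
      · simpa [hneg] using i.2.2
      · simpa [hpos] using i.2.1
    simp only [satisfies_update_iff _ x hx]
  have htrue : Satisfies (Function.update τ x true) (F i') :=
    ⟨(x, true), (hpos i').2 rfl, by simp⟩
  have hfalse : Satisfies (Function.update τ x false) (F i'') :=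
    ⟨(x, false), (hneg i'').2 rfl, by simp⟩
  have hx' : ∀ b, (x, b) ∉ F i' \ {(x, true)} := by
    intro b
    cases b <;> simp [hneg, hii]
  have hx'' : ∀ b, (x, b) ∉ F i'' \ {(x, false)} := by
    intro b
    cases b <;> simp [hpos, hii.symm]
  have mono : ∀ {σ : V → Bool} {c d : Finset (V × Bool)}, Satisfies σ (c \ d) → Satisfies σ c :=
    fun ⟨l, hl, h⟩ => ⟨l, (Finset.mem_sdiff.1 hl).1, h⟩
  rw [satCount_resolvent]
  by_cases h' : Satisfies τ (F i' \ {(x, true)})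
  · -- `c'` stays satisfied without `x`, so `x` is spent on `c''`.
    refine ⟨Function.update τ x false, ?_⟩
    rw [satCount_eq_rest F i' i'' hii, hrest, if_pos hfalse,
      if_pos (mono ((satisfies_update_iff _ x hx' τ false).2 h'))]
    split_ifs <;> omega
  · refine ⟨Function.update τ x true, ?_⟩
    rw [satCount_eq_rest F i' i'' hii, hrest, if_pos htrue]
    by_cases h'' : Satisfies τ (F i'' \ {(x, false)})
    · rw [if_pos (mono ((satisfies_update_iff _ x hx'' τ true).2 h''))]
      split_ifs <;> omega
    · rw [if_neg]
      · omega
      · rintro ⟨l, hl, h⟩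
        rcases Finset.mem_union.1 hl with hl | hl
        exacts [h' ⟨l, hl, h⟩, h'' ⟨l, hl, h⟩]

/-- Reduction Rule 2: if `n(x) = n(x̄) = 1`, with `(x, true)` occurring only in clause `i'`
and `(x, false)` only in clause `i''`, then replacing these two clauses by the single
clause `c* = (F i' ∖ {(x,true)}) ∪ (F i'' ∖ {(x,false)})` decreases `sat` by exactly 1. -/
theorem stmt4 {V I : Type*} [Fintype V] [Fintype I] (F : I → Finset (V × Bool))
    (hne : ∀ i, (F i).Nonempty)
    (hone : ∀ i v b b', (v, b) ∈ F i → (v, b') ∈ F i → b = b')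
    (x : V) (i' i'' : I) (hii : i' ≠ i'')
    (hpos : ∀ i, (x, true) ∈ F i ↔ i = i')
    (hneg : ∀ i, (x, false) ∈ F i ↔ i = i'') :
    satMax F =
      satMax (fun j : {i : I // i ≠ i' ∧ i ≠ i''} ⊕ Unit =>
        match j with
        | Sum.inl i => F i.1
        | Sum.inr _ => (F i' \ {(x, true)}) ∪ (F i'' \ {(x, false)})) + 1 := by
  trans satMax (resolventFormula F x i' i'') + 1
  swap
  · congr 2
    funext j
    rcases j with i | u <;> rfl
  apply le_antisymm
  · refine Finset.sup_le fun τ _ => ?_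
    refine (satCount_le_resolvent F x i' i'' hii τ).trans ?_
    exact Nat.add_le_add_right (Finset.le_sup
      (f := fun τ => satCount (resolventFormula F x i' i'') τ) (Finset.mem_univ τ)) 1
  · obtain ⟨τ, -, hτ⟩ := Finset.exists_mem_eq_sup Finset.univ Finset.univ_nonempty
      (fun τ : V → Bool => satCount (resolventFormula F x i' i'') τ)
    obtain ⟨σ, hσ⟩ := exists_satCount_ge_resolvent F x i' i'' hii hpos hneg τ
    rw [satMax, hτ]
    exact hσ.trans (Finset.le_sup (f := fun τ => satCount F τ) (Finset.mem_univ σ))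
end

section
/- For every CNF formula F over V there exist a set U ⊆ V and an assignment π : V → Bool that is an autarky on U such that the subfamily F ∖ F_U (the clauses of F containing no variable of U) is 1-expanding. -/
/-!
For a set `U` of variables let `A U` be the set of indices of clauses avoiding `U`. Choose `U`
maximizing `|U| + |A U|` and, among the maximizers, having the most elements. (Maximizing
`|U| + |A U|` is the same as maximizing the deficiency `|U| - |F_U|`, without subtraction.)

*Expansion.* A set `X` of variables occurring in clauses of `A U` is disjoint from `U`. If `X` is
nonempty, then `U ∪ X` is strictly larger than `U`, so `|U ∪ X| + |A (U ∪ X)| < |U| + |A U|`; this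
says that more than `|X|` clauses of `A U` contain a variable of `X`.

*Autarky.* For a set `S` of clauses meeting `U`, comparing `U` with `U` minus the variables
occurring in `S` shows that at least `|S|` variables of `U` occur in `S`. By Hall's theorem the
clauses meeting `U` can be matched injectively to variables of `U` occurring in them, and each
matched variable can be set so as to satisfy its own clause.
-/

open scoped Classical

/-- The indices of the clauses of `F` containing no variable of `U`. -/
noncomputable def avoiding {V I : Type*} [Fintype I] (F : I → Finset (V × Bool))
    (U : Finset V) : Finset I :=
  Finset.univ.filter fun i => ¬ ∃ l ∈ F i, l.1 ∈ U

/-- Hall's condition holds for the clauses meeting a set `U` that maximizes `|U| + |A U|`, so these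
clauses are matched injectively to variables of `U` occurring in them. -/
theorem exists_matching_of_max {V I : Type*} [Fintype I] (F : I → Finset (V × Bool))
    (U : Finset V)
    (hU : ∀ W : Finset V, W.card + (avoiding F W).card ≤ U.card + (avoiding F U).card) :
    ∃ f : {i : I // ∃ l ∈ F i, l.1 ∈ U} → V, Function.Injective f ∧
      ∀ i, f i ∈ ((F i.1).image Prod.fst).filter (· ∈ U) := by
  rw [← Finset.all_card_le_biUnion_card_iff_exists_injective
    (fun i : {i : I // ∃ l ∈ F i, l.1 ∈ U} => ((F i.1).image Prod.fst).filter (· ∈ U))]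
  intro S
  set N := S.biUnion fun i => ((F i.1).image Prod.fst).filter (· ∈ U) with hN
  have hNU : N ⊆ U := by
    intro v hv
    simp only [hN, Finset.mem_biUnion, Finset.mem_filter] at hv
    obtain ⟨_, _, _, h⟩ := hv
    exact h
  have hdisj : Disjoint (avoiding F U) (S.map (Function.Embedding.subtype _)) := by
    rw [Finset.disjoint_left]
    intro i hi hi'
    simp only [Finset.mem_map, Function.Embedding.subtype_apply] at hi'
    obtain ⟨j, _, rfl⟩ := hi'
    exact (Finset.mem_filter.mp hi).2 j.2
  have hsub : avoiding F U ∪ S.map (Function.Embedding.subtype _) ⊆ avoiding F (U \ N) := by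
    intro i hi
    simp only [avoiding, Finset.mem_filter, Finset.mem_univ, true_and]
    rintro ⟨l, hl, hlU⟩
    rw [Finset.mem_sdiff] at hlU
    rcases Finset.mem_union.mp hi with hi | hi
    · exact (Finset.mem_filter.mp hi).2 ⟨l, hl, hlU.1⟩
    · simp only [Finset.mem_map, Function.Embedding.subtype_apply] at hi
      obtain ⟨j, hj, rfl⟩ := hi
      exact hlU.2 (Finset.mem_biUnion.mpr
        ⟨j, hj, Finset.mem_filter.mpr ⟨Finset.mem_image_of_mem _ hl, hlU.1⟩⟩)
  have h1 := Finset.card_le_card hsub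
  rw [Finset.card_union_of_disjoint hdisj, Finset.card_map] at h1
  have h2 := Finset.card_sdiff_add_card_eq_card hNU
  have h3 := hU (U \ N)
  omega

/-- For every CNF formula `F` there exist a set `U` of variables and an assignment `π`
that is an autarky on `U` such that the subfamily `F ∖ F_U` is 1-expanding. -/
theorem stmt5 {V I : Type*} [Fintype V] [Fintype I] (F : I → Finset (V × Bool))
    (hne : ∀ i, (F i).Nonempty)
    (hone : ∀ i v b b', (v, b) ∈ F i → (v, b') ∈ F i → b = b') :
    ∃ (U : Finset V) (π : V → Bool),
      (∀ i : I, (∃ l ∈ F i, l.1 ∈ U) → ∃ l ∈ F i, l.1 ∈ U ∧ π l.1 = l.2) ∧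
      ∀ X : Finset V, X.Nonempty →
        (∀ x ∈ X, ∃ i : I, (¬ ∃ l ∈ F i, l.1 ∈ U) ∧ ∃ b, (x, b) ∈ F i) →
        X.card + 1 ≤ (Finset.univ.filter fun i : I =>
          (¬ ∃ l ∈ F i, l.1 ∈ U) ∧ ∃ l ∈ F i, l.1 ∈ X).card := by
  obtain ⟨U, -, hU⟩ := Finset.exists_max_image (Finset.univ : Finset (Finset V))
    (fun U => toLex (U.card + (avoiding F U).card, U.card)) ⟨∅, Finset.mem_univ _⟩
  simp only [Finset.mem_univ, true_imp_iff, Prod.Lex.toLex_le_toLex] at hU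
  obtain ⟨f, hf, hfU⟩ := exists_matching_of_max F U fun W => by
    rcases hU W with h | h
    · exact h.le
    · exact h.1.le
  -- A variable is made true exactly when it occurs positively in the clause matched to it.
  refine ⟨U, fun v => decide (∃ i, f i = v ∧ (v, true) ∈ F i.1), ?_, ?_⟩
  · intro i hi
    have hmem := hfU ⟨i, hi⟩
    simp only [Finset.mem_filter, Finset.mem_image] at hmem
    obtain ⟨⟨⟨v, b⟩, hl, hv⟩, hvU⟩ := hmem
    dsimp only at hv
    rw [← hv] at hvU
    refine ⟨(v, b), hl, hvU, ?_⟩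
    cases b with
    | true => exact decide_eq_true ⟨⟨i, hi⟩, hv.symm, hl⟩
    | false =>
      refine decide_eq_false ?_
      rintro ⟨j, hj, hjt⟩
      -- By injectivity the clause matched to `v` is `i`, where `v` occurs negatively.
      obtain rfl := hf (hj.trans hv)
      exact Bool.false_ne_true (hone _ _ _ _ hl hjt)
  · intro X hX hocc
    have hdisj : Disjoint U X := by
      rw [Finset.disjoint_left]
      intro x hxU hxX
      obtain ⟨i, hi, b, hb⟩ := hocc x hxX
      exact hi ⟨_, hb, hxU⟩
    set T := Finset.univ.filter fun i : I =>
      (¬ ∃ l ∈ F i, l.1 ∈ U) ∧ ∃ l ∈ F i, l.1 ∈ X with hT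
    have hsub : avoiding F U ⊆ avoiding F (U ∪ X) ∪ T := by
      intro i hi
      have hi' := (Finset.mem_filter.mp hi).2
      by_cases h : ∃ l ∈ F i, l.1 ∈ X
      · exact Finset.mem_union_right _ (Finset.mem_filter.mpr ⟨Finset.mem_univ _, hi', h⟩)
      · refine Finset.mem_union_left _ (Finset.mem_filter.mpr ⟨Finset.mem_univ _, ?_⟩)
        rintro ⟨l, hl, hlUX⟩
        rcases Finset.mem_union.mp hlUX with h' | h'
        · exact hi' ⟨l, hl, h'⟩
        · exact h ⟨l, hl, h'⟩
    have h1 := (Finset.card_le_card hsub).trans (Finset.card_union_le _ _)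
    have h2 := Finset.card_union_of_disjoint hdisj
    have h3 := hX.card_pos
    have h4 := hU (U ∪ X)
    omega
end

section
/- Let A and B be finite types and r : A → B → Prop a relation such that |N(X)| ≥ |X| for every X ⊆ A, where N(X) = {b : B | ∃ a ∈ X, r a b}, and let q ≥ 1 be a natural number. Then the following are equivalent: (i) |N(X)| ≥ |X| + q for every nonempty X ⊆ A; (ii) for every x ∈ A, the relation r' on A ⊕ Fin q defined by r' (inl a) b = r a b and r' (inr t) b = r x b satisfies |N'(Y)| ≥ |Y| for every Y ⊆ A ⊕ Fin q, where N'(Y) = {b : B | ∃ u ∈ Y, r' u b}. -/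
/-!
If `x ∈ X`, then adding the `q` copies of `x` to `X` raises its size by `q` and leaves its
neighbourhood unchanged, so 0-expansion of `G_{qx}` gives `q`-expansion at `X`. Conversely, a
set `Y` of vertices of `G_{qx}` has at most `q` copies of `x`, so `q`-expansion at its part in
`A` (or at `{x}`, if that part is empty) bounds `|Y|`.
-/

open scoped Classical

/-- A 0-expanding bipartite graph `r : A → B → Prop` is `q`-expanding (`q ≥ 1`) if and
only if, for every `x ∈ A`, the graph `G_{qx}` obtained by adding `q` new vertices with
the same neighborhood as `x` is 0-expanding. -/
theorem stmt6 {A B : Type*} [Fintype A] [Fintype B] (r : A → B → Prop)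
    (q : ℕ) (hq : 1 ≤ q)
    (h0 : ∀ X : Finset A,
      X.card ≤ (Finset.univ.filter fun b : B => ∃ a ∈ X, r a b).card) :
    (∀ X : Finset A, X.Nonempty →
        X.card + q ≤ (Finset.univ.filter fun b : B => ∃ a ∈ X, r a b).card) ↔
    (∀ x : A, ∀ Y : Finset (A ⊕ Fin q),
        Y.card ≤ (Finset.univ.filter fun b : B =>
          ∃ u ∈ Y, Sum.elim r (fun _ => r x) u b).card) := by
  constructor
  · intro h x Y
    have hY := Y.card_toLeft_add_card_toRight
    have hR : Y.toRight.card ≤ q := by simpa using Finset.card_le_univ Y.toRight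
    rcases Y.toLeft.eq_empty_or_nonempty with hL | hL
    · rcases Y.toRight.eq_empty_or_nonempty with hR' | ⟨t, ht⟩
      · simp [← hY, hL, hR']
      · -- Only copies of `x` occur in `Y`, so the neighbourhood of `x` alone suffices.
        have h1 := h {x} (Finset.singleton_nonempty x)
        have h2 : (Finset.univ.filter fun b : B => ∃ a ∈ ({x} : Finset A), r a b).card ≤
            (Finset.univ.filter fun b : B =>
              ∃ u ∈ Y, Sum.elim r (fun _ => r x) u b).card := by
          refine Finset.card_le_card (Finset.monotone_filter_right _ ?_)
          rintro b - ⟨a, ha, hab⟩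
          obtain rfl := Finset.mem_singleton.1 ha
          exact ⟨Sum.inr t, Finset.mem_toRight.1 ht, hab⟩
        rw [hL, Finset.card_empty] at hY
        omega
    · have h1 := h Y.toLeft hL
      have h2 : (Finset.univ.filter fun b : B => ∃ a ∈ Y.toLeft, r a b).card ≤
          (Finset.univ.filter fun b : B =>
            ∃ u ∈ Y, Sum.elim r (fun _ => r x) u b).card := by
        refine Finset.card_le_card (Finset.monotone_filter_right _ ?_)
        rintro b - ⟨a, ha, hab⟩
        exact ⟨Sum.inl a, Finset.mem_toLeft.1 ha, hab⟩
      omega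
  · rintro h X ⟨x, hx⟩
    -- Adding all `q` copies of a vertex `x ∈ X` does not enlarge the neighbourhood of `X`.
    have h1 := h x (X.disjSum Finset.univ)
    rw [Finset.card_disjSum, Finset.card_univ, Fintype.card_fin] at h1
    refine h1.trans (Finset.card_le_card (Finset.monotone_filter_right _ ?_))
    rintro b - ⟨a | t, hu, hab⟩
    · exact ⟨a, Finset.inl_mem_disjSum.1 hu, hab⟩
    · exact ⟨x, hx, hab⟩
end

section
/- Let F be a CNF formula and let x ≠ y be variables with n(x) = n(y) = 1, such that some clause of F contains both positive literals (x, true) and (y, true). Then there exists an assignment τ with sat_τ(F) = sat(F) such that τ x = false or τ y = false. -/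
/-!
Start from an optimal assignment `τ`. If it sets `y` to true, reset `x` to false.
Only a clause satisfied through the literal `(x, true)` could be lost, and the unique such clause
is the one that also contains `(y, true)`, which still holds. So the new assignment is still optimal.
-/

open scoped Classical

/-- If `x ≠ y` are variables each occurring positively in exactly one clause, and some
clause contains both positive literals `x` and `y`, then some optimal assignment sets
`x` or `y` to false. -/
theorem stmt9 {V I : Type*} [Fintype V] [Fintype I] (F : I → Finset (V × Bool))
    (hne : ∀ i, (F i).Nonempty)
    (hone : ∀ i v b b', (v, b) ∈ F i → (v, b') ∈ F i → b = b')
    (x y : V) (hxy : x ≠ y)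
    (hx : (Finset.univ.filter fun i : I => (x, true) ∈ F i).card = 1)
    (hy : (Finset.univ.filter fun i : I => (y, true) ∈ F i).card = 1)
    (hc : ∃ i : I, (x, true) ∈ F i ∧ (y, true) ∈ F i) :
    ∃ τ : V → Bool, satCount F τ = satMax F ∧ (τ x = false ∨ τ y = false) := by
  obtain ⟨c, hcx, hcy⟩ := hc
  obtain ⟨τ, -, hτ⟩ := Finset.exists_mem_eq_sup Finset.univ
    (Finset.univ_nonempty : (Finset.univ : Finset (V → Bool)).Nonempty) (satCount F)
  have hmax : satCount F τ = satMax F := hτ.symm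
  by_cases hty : τ y = false
  · exact ⟨τ, hmax, Or.inr hty⟩
  have hty' : τ y = true := by simpa using hty
  refine ⟨Function.update τ x false, le_antisymm ?_ ?_, Or.inl (by simp)⟩
  · exact Finset.le_sup (f := satCount F) (Finset.mem_univ _)
  · rw [← hmax]
    refine Finset.card_le_card fun i hi => ?_
    simp only [Finset.mem_filter, Finset.mem_univ, true_and] at hi ⊢
    obtain ⟨⟨v, b⟩, hl, hv⟩ := hi
    by_cases hvx : v = x
    · subst hvx
      cases b with
      | false => exact ⟨(v, false), hl, by simp⟩
      | true =>
        have hic : i = c :=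
          Finset.card_le_one.mp hx.le i (by simpa using hl) c (by simpa using hcx)
        subst hic
        exact ⟨(y, true), hcy, by simpa [Function.update_of_ne hxy.symm] using hty'⟩
    · exact ⟨(v, b), hl, by simpa [Function.update_of_ne hvx] using hv⟩
end

section
/- Let F be a CNF formula over V in which every variable z occurs positively in exactly one clause, denoted c(z), and every clause contains at most one positive literal. Let x be a variable with |c(x)| ≥ 2, let i_x be the index of c(x), and let c' = c(x) ∖ {(x, true)}. Let F' be the formula on the same index set defined by: F'(i_x) = {(x, true)}; F'(i) = F(i) ∪ c' for every index i ≠ i_x whose clause contains the literal (x, false); and F'(i) = F(i) for all other indices (clauses of F' may contain both a literal and its negation; satisfaction is defined as before). Then sat(F') = sat(F) and ν(F') = ν(F). -/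
/-!
Matching number: since a clause has at most one positive literal, `z ↦ c z` is injective, so the
pairs `(z, c z)` form a matching covering every variable, and `ν(F) = |V|`. These pairs are still a
matching of `F'`, so `ν(F') = |V|` too (`matchNum_eq_card`).

Satisfiability: every assignment for one formula is turned into an assignment for the other one that
satisfies every index satisfied before (`satMax_le_of_forall_exists`). If the current assignment
satisfies `c' = c(x) ∖ {x}`, then `x` is set to true for `F'` (the unit clause holds, and the clauses
with `x̄` hold through `c'`) and to false for `F` (`c(x)` holds through `c'`, the clauses with `x̄`
hold trivially). If it does not satisfy `c'`, it satisfies no index of one formula that it fails to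
satisfy in the other. Changing `x` affects neither `c'` nor the clauses without `x`.
-/

open scoped Classical

theorem satMax_le_of_forall_exists {V I : Type*} [Fintype V] [Fintype I]
    {F G : I → Finset (V × Bool)}
    (h : ∀ τ : V → Bool, ∃ σ : V → Bool, ∀ i, Satisfies τ (F i) → Satisfies σ (G i)) :
    satMax F ≤ satMax G := by
  refine Finset.sup_le fun τ _ => ?_
  obtain ⟨σ, hσ⟩ := h τ
  refine le_trans ?_ (Finset.le_sup (f := fun τ : V → Bool => satCount G τ) (Finset.mem_univ σ))
  exact Finset.card_le_card fun i hi => by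
    simp only [Finset.mem_filter, Finset.mem_univ, true_and] at hi ⊢
    exact hσ i hi

/-- Satisfaction of a clause without the variable `x` does not depend on the value of `x`. -/
theorem Satisfies.update {V : Type*} {τ : V → Bool} {d : Finset (V × Bool)}
    (h : Satisfies τ d) {x : V} (hx : ∀ b, (x, b) ∉ d) (a : Bool) :
    Satisfies (Function.update τ x a) d := by
  obtain ⟨⟨v, b⟩, hl, hv⟩ := h
  refine ⟨(v, b), hl, ?_⟩
  have : v ≠ x := by rintro rfl; exact hx b hl
  simpa [Function.update_of_ne this] using hv

theorem Satisfies.mono {V : Type*} {τ : V → Bool} {d e : Finset (V × Bool)}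
    (h : Satisfies τ d) (hde : d ⊆ e) : Satisfies τ e := by
  obtain ⟨l, hl, hv⟩ := h
  exact ⟨l, hde hl, hv⟩

/-- A matching covering all variables, given by an injection `c`, is a largest one. -/
theorem matchNum_eq_card {V I : Type*} [Fintype V] [Fintype I]
    {F : I → Finset (V × Bool)} {c : V → I} (hinj : Function.Injective c)
    (hc : ∀ z, ∃ b, (z, b) ∈ F (c z)) : matchNum F = Fintype.card V := by
  apply le_antisymm
  · refine Finset.sup_le fun M hM => ?_
    simp only [Finset.mem_filter, Finset.mem_univ, true_and] at hM
    refine Finset.card_le_card_of_injOn (t := Finset.univ) Prod.fst (fun _ _ => by simp) ?_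
    intro p hp q hq hpq
    by_contra hne
    exact (hM.2 p hp q hq hne).1 hpq
  · let M : Finset (V × I) := Finset.univ.image fun z => (z, c z)
    have hM : IsMatching F M := by
      constructor
      · intro p hp
        obtain ⟨z, -, rfl⟩ := Finset.mem_image.1 hp
        exact hc z
      · intro p hp q hq hpq
        obtain ⟨z, -, rfl⟩ := Finset.mem_image.1 hp
        obtain ⟨w, -, rfl⟩ := Finset.mem_image.1 hq
        have hzw : z ≠ w := by rintro rfl; exact hpq rfl
        exact ⟨hzw, hinj.ne hzw⟩
    have hcard : M.card = Fintype.card V :=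
      Finset.card_image_of_injective _ fun z w h => congrArg Prod.fst h
    rw [← hcard]
    exact Finset.le_sup (f := Finset.card) (by simpa using hM)

/-- The transformation of Section 4: if every variable occurs positively in exactly one
clause `c(z)` and every clause has at most one positive literal, then for a variable `x`
with `|c(x)| ≥ 2`, replacing `c(x)` by the unit clause `{(x, true)}` and adding
`c' = c(x) ∖ {(x, true)}` to every clause containing `(x, false)` preserves both `sat`
and the matching number. -/
theorem stmt10 {V I : Type*} [Fintype V] [Fintype I] (F : I → Finset (V × Bool))
    (hne : ∀ i, (F i).Nonempty)
    (hone : ∀ i v b b', (v, b) ∈ F i → (v, b') ∈ F i → b = b')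
    (c : V → I) (hc : ∀ (z : V) (i : I), (z, true) ∈ F i ↔ i = c z)
    (hpos : ∀ i v w, (v, true) ∈ F i → (w, true) ∈ F i → v = w)
    (x : V) (hx : 2 ≤ (F (c x)).card)
    (F' : I → Finset (V × Bool))
    (hF' : ∀ i, F' i =
      if i = c x then {(x, true)}
      else if (x, false) ∈ F i then F i ∪ (F (c x) \ {(x, true)})
      else F i) :
    satMax F' = satMax F ∧ matchNum F' = matchNum F := by
  have hinj : Function.Injective c := fun z w h =>
    hpos (c z) z w ((hc z _).2 rfl) ((hc w _).2 h)
  have hxc : (x, true) ∈ F (c x) := (hc x _).2 rfl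
  have hunit : F' (c x) = {(x, true)} := by simp [hF']
  have hneg : ∀ i, i ≠ c x → (x, false) ∈ F i → F' i = F i ∪ (F (c x) \ {(x, true)}) :=
    fun i hi hm => by simp [hF', hi, hm]
  have hother : ∀ i, i ≠ c x → (x, false) ∉ F i → F' i = F i :=
    fun i hi hm => by simp [hF', hi, hm]
  have hsub : ∀ i, i ≠ c x → F i ⊆ F' i := by
    intro i hi
    by_cases hm : (x, false) ∈ F i
    · rw [hneg i hi hm]; exact Finset.subset_union_left
    · rw [hother i hi hm]
  have hfree : ∀ i, i ≠ c x → (x, false) ∉ F i → ∀ b, (x, b) ∉ F i := by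
    rintro i hi hm (_ | _) hb
    · exact hm hb
    · exact hi ((hc x i).1 hb)
  have hfree' : ∀ b, (x, b) ∉ F (c x) \ {(x, true)} := by
    intro b hb
    rw [Finset.mem_sdiff, Finset.mem_singleton] at hb
    exact hb.2 (by rw [hone _ _ _ _ hb.1 hxc])
  refine ⟨le_antisymm ?_ ?_, ?_⟩
  · refine satMax_le_of_forall_exists fun τ => ?_
    by_cases hs : Satisfies τ (F (c x) \ {(x, true)})
    · refine ⟨Function.update τ x false, fun i hi => ?_⟩
      by_cases hic : i = c x
      · subst hic
        exact (hs.update hfree' false).mono Finset.sdiff_subset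
      by_cases hm : (x, false) ∈ F i
      · exact ⟨_, hm, by simp⟩
      · rw [hother i hic hm] at hi
        exact hi.update (hfree i hic hm) false
    · refine ⟨τ, fun i hi => ?_⟩
      by_cases hic : i = c x
      · subst hic
        rw [hunit] at hi
        exact hi.mono (by simpa using hxc)
      by_cases hm : (x, false) ∈ F i
      · rw [hneg i hic hm] at hi
        obtain ⟨l, hl, hv⟩ := hi
        rcases Finset.mem_union.1 hl with hl | hl
        · exact ⟨l, hl, hv⟩
        · exact absurd ⟨l, hl, hv⟩ hs
      · rwa [hother i hic hm] at hi
  · refine satMax_le_of_forall_exists fun τ => ?_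
    by_cases hs : Satisfies τ (F (c x) \ {(x, true)})
    · refine ⟨Function.update τ x true, fun i hi => ?_⟩
      by_cases hic : i = c x
      · subst hic
        rw [hunit]
        exact ⟨_, Finset.mem_singleton_self _, by simp⟩
      by_cases hm : (x, false) ∈ F i
      · rw [hneg i hic hm]
        exact (hs.update hfree' true).mono Finset.subset_union_right
      · rw [hother i hic hm]
        exact hi.update (hfree i hic hm) true
    · refine ⟨τ, fun i hi => ?_⟩
      by_cases hic : i = c x
      · subst hic
        obtain ⟨l, hl, hv⟩ := hi
        rw [hunit]
        by_cases hlx : l = (x, true)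
        · exact ⟨l, by simp [hlx], hv⟩
        · exact absurd ⟨l, by simp [hl, hlx], hv⟩ hs
      · exact hi.mono (hsub i hic)
  · rw [matchNum_eq_card (F := F) hinj fun z => ⟨true, (hc z _).2 rfl⟩]
    refine matchNum_eq_card hinj fun z => ⟨true, ?_⟩
    by_cases hz : z = x
    · subst hz; simp [hunit]
    · exact hsub _ (hinj.ne hz) ((hc z _).2 rfl)
end

section
/- Let F be a CNF formula over a finite variable type V whose index set is a disjoint union I = I₁ ⊔ I₂ such that there is a bijection u : V → I₁ with F(u x) = {(x, true)} for every x ∈ V, and for every i ∈ I₂ the clause F i is nonempty and contains only negative literals. Let τ* be the minimum cardinality of a set S ⊆ V such that S intersects the variable set of F i for every i ∈ I₂ (such a set exists). Then sat(F) = |I| − τ*. -/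
/-!
Complementing, the claim says that the least number of clauses falsified by an assignment
equals the least size of a hitting set of the negative clauses.

Given an assignment `τ`, pick from each falsified clause one of its variables. The picked set has
at most as many elements as there are falsified clauses, and it hits every negative clause: a
falsified one by choice, and a satisfied one because it has a variable set to false, whose
positive unit clause is falsified (`exists_hitting_card_le`). Conversely, setting exactly the
variables of a hitting set `S` to false satisfies all negative clauses and falsifies only the unit
clauses of `S` (`card_falsified_le`).
-/

open scoped Classical

theorem satCount_add_falsified {V I : Type*} [Fintype I]
    (F : I → Finset (V × Bool)) (τ : V → Bool) :
    satCount F τ + (Finset.univ.filter fun i => ¬ Satisfies τ (F i)).card = Fintype.card I := by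
  unfold satCount
  rw [Finset.card_filter_add_card_filter_not, Finset.card_univ]

/-- Every assignment yields a hitting set of the negative clauses that is no larger than the
number of clauses the assignment falsifies. -/
theorem exists_hitting_card_le {V I₁ I₂ : Type*} [Fintype I₁] [Fintype I₂]
    (F : I₁ ⊕ I₂ → Finset (V × Bool))
    (u : V ≃ I₁) (hu : ∀ x : V, F (Sum.inl (u x)) = {(x, true)})
    (h2 : ∀ j : I₂, (F (Sum.inr j)).Nonempty ∧ ∀ l ∈ F (Sum.inr j), l.2 = false)
    (τ : V → Bool) :
    ∃ S : Finset V, (∀ j : I₂, ∃ v ∈ S, ∃ b, (v, b) ∈ F (Sum.inr j)) ∧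
      S.card ≤ (Finset.univ.filter fun i => ¬ Satisfies τ (F i)).card := by
  choose l hl using fun j => (h2 j).1
  refine ⟨(Finset.univ.filter fun i => ¬ Satisfies τ (F i)).image
    (Sum.elim u.symm fun j => (l j).1), fun j => ?_, Finset.card_image_le⟩
  by_cases hj : Satisfies τ (F (Sum.inr j))
  · obtain ⟨⟨v, b⟩, hm, hv⟩ := hj
    have hb : b = false := (h2 j).2 _ hm
    refine ⟨v, Finset.mem_image.2 ⟨Sum.inl (u v), ?_, by simp⟩, b, hm⟩
    simp only [Finset.mem_filter, Finset.mem_univ, true_and, hu]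
    simp_all [Satisfies]
  · exact ⟨(l j).1, Finset.mem_image.2 ⟨Sum.inr j, by simpa using hj, rfl⟩, (l j).2, hl j⟩

/-- Setting exactly the variables of a hitting set `S` to false falsifies at most `S.card`
clauses. -/
theorem card_falsified_le {V I₁ I₂ : Type*} [Fintype I₁] [Fintype I₂]
    (F : I₁ ⊕ I₂ → Finset (V × Bool))
    (u : V ≃ I₁) (hu : ∀ x : V, F (Sum.inl (u x)) = {(x, true)})
    (h2 : ∀ j : I₂, (F (Sum.inr j)).Nonempty ∧ ∀ l ∈ F (Sum.inr j), l.2 = false)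
    (S : Finset V) (hS : ∀ j : I₂, ∃ v ∈ S, ∃ b, (v, b) ∈ F (Sum.inr j)) :
    (Finset.univ.filter fun i => ¬ Satisfies (fun v => decide (v ∉ S)) (F i)).card ≤ S.card := by
  refine le_trans (Finset.card_le_card ?_)
    (Finset.card_image_le (s := S) (f := fun v => (Sum.inl (u v) : I₁ ⊕ I₂)))
  intro i hi
  replace hi := (Finset.mem_filter.1 hi).2
  rcases i with i | j
  · obtain ⟨v, rfl⟩ := u.surjective i
    rw [hu] at hi
    refine Finset.mem_image.2 ⟨v, ?_, rfl⟩
    simpa [Satisfies] using hi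
  · obtain ⟨v, hv, b, hb⟩ := hS j
    have hbf : b = false := (h2 j).2 _ hb
    exact absurd ⟨(v, b), hb, by simp [hv, hbf]⟩ hi

/-- For a transformed special formula (unit positive clauses indexed by `I₁` via a
bijection with the variables, and purely negative nonempty clauses indexed by `I₂`),
`sat(F) = |I| − τ*`, where `τ*` is the minimum size of a set of variables hitting the
variable set of every clause of `I₂`. -/
theorem stmt11 {V I₁ I₂ : Type*} [Fintype V] [Fintype I₁] [Fintype I₂]
    (F : I₁ ⊕ I₂ → Finset (V × Bool))
    (hone : ∀ i v b b', (v, b) ∈ F i → (v, b') ∈ F i → b = b')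
    (u : V ≃ I₁) (hu : ∀ x : V, F (Sum.inl (u x)) = {(x, true)})
    (h2 : ∀ j : I₂, (F (Sum.inr j)).Nonempty ∧ ∀ l ∈ F (Sum.inr j), l.2 = false) :
    satMax F = Fintype.card (I₁ ⊕ I₂) -
      sInf {n : ℕ | ∃ S : Finset V,
        (∀ j : I₂, ∃ v ∈ S, ∃ b, (v, b) ∈ F (Sum.inr j)) ∧ S.card = n} := by
  set T : Set ℕ := {n : ℕ | ∃ S : Finset V,
        (∀ j : I₂, ∃ v ∈ S, ∃ b, (v, b) ∈ F (Sum.inr j)) ∧ S.card = n} with hT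
  have hne : T.Nonempty := by
    obtain ⟨S, hS, -⟩ := exists_hitting_card_le F u hu h2 fun _ => true
    exact ⟨S.card, S, hS, rfl⟩
  apply le_antisymm
  · refine Finset.sup_le fun τ _ => ?_
    obtain ⟨S, hS, hle⟩ := exists_hitting_card_le F u hu h2 τ
    have hmin : sInf T ≤ S.card := Nat.sInf_le ⟨S, hS, rfl⟩
    have hsum := satCount_add_falsified F τ
    omega
  · obtain ⟨S, hS, hcard⟩ := Nat.sInf_mem hne
    have hfals := card_falsified_le F u hu h2 S hS
    have hsum := satCount_add_falsified F fun v => decide (v ∉ S)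
    have hsup : satCount F (fun v => decide (v ∉ S)) ≤ satMax F :=
      Finset.le_sup (f := fun τ : V → Bool => satCount F τ) (Finset.mem_univ _)
    omega
end

section
/- Let F be a CNF formula over a finite variable type V whose index set is a disjoint union I = I₁ ⊔ I₂ such that there is a bijection u : V → I₁ with F(u x) = {(x, true)} for every x ∈ V, and for every i ∈ I₂ the clause F i is nonempty and contains only negative literals. Then there exists an assignment τ with sat_τ(F) = sat(F) that satisfies the clause F i for every i ∈ I₂. -/
/-!
Take, among the assignments maximising `satCount F`, one with the fewest variables set to true.
If it left a negative clause `F (Sum.inr j)` unsatisfied, every variable of that clause would be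
true; setting one of them, `x`, to false breaks only the unit clause of `x`, repairs clause `j`,
and keeps every other satisfied negative clause satisfied. The count does not drop, so the new
assignment is still optimal but has fewer true variables, a contradiction.
-/

open scoped Classical

/-- For a transformed special formula (unit positive clauses indexed by `I₁` via a
bijection with the variables, and purely negative nonempty clauses indexed by `I₂`),
there is an optimal assignment satisfying every clause of `I₂`. -/
theorem stmt12 {V I₁ I₂ : Type*} [Fintype V] [Fintype I₁] [Fintype I₂]
    (F : I₁ ⊕ I₂ → Finset (V × Bool))
    (hone : ∀ i v b b', (v, b) ∈ F i → (v, b') ∈ F i → b = b')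
    (u : V ≃ I₁) (hu : ∀ x : V, F (Sum.inl (u x)) = {(x, true)})
    (h2 : ∀ j : I₂, (F (Sum.inr j)).Nonempty ∧ ∀ l ∈ F (Sum.inr j), l.2 = false) :
    ∃ τ : V → Bool, satCount F τ = satMax F ∧
      ∀ j : I₂, Satisfies τ (F (Sum.inr j)) := by
  -- Optimal assignments exist, since the supremum over the nonempty finite `V → Bool` is attained.
  obtain ⟨σ, -, hσ⟩ := Finset.exists_mem_eq_sup (Finset.univ : Finset (V → Bool))
    Finset.univ_nonempty (fun τ => satCount F τ)
  obtain ⟨τ, hτ, hmin⟩ := Finset.exists_min_image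
    (Finset.univ.filter fun τ : V → Bool => satCount F τ = satMax F)
    (fun τ => (Finset.univ.filter fun v => τ v = true).card)
    ⟨σ, Finset.mem_filter.2 ⟨Finset.mem_univ _, hσ.symm⟩⟩
  have hopt : satCount F τ = satMax F := by simpa using hτ
  refine ⟨τ, hopt, fun j => ?_⟩
  by_contra hj
  obtain ⟨⟨x, b⟩, hx⟩ := (h2 j).1
  have hb : b = false := (h2 j).2 _ hx
  subst hb
  have hτx : τ x = true := by
    by_contra h
    exact hj ⟨_, hx, by simpa using h⟩
  have hle : satCount F τ ≤ satCount F (Function.update τ x false) := by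
    have hj' : Sum.inr j ∈ Finset.univ.filter
        (fun i => Satisfies (Function.update τ x false) (F i)) := by
      simp only [Finset.mem_filter, Finset.mem_univ, true_and]
      exact ⟨_, hx, by simp⟩
    -- Exchange the unit clause of `x` for clause `j`.
    have hsub : (Finset.univ.filter fun i => Satisfies τ (F i)) ⊆
        insert (Sum.inl (u x)) ((Finset.univ.filter
          (fun i => Satisfies (Function.update τ x false) (F i))).erase (Sum.inr j)) := by
      intro i hi
      simp only [Finset.mem_filter, Finset.mem_univ, true_and] at hi
      simp only [Finset.mem_insert, Finset.mem_erase, Finset.mem_filter, Finset.mem_univ,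
        true_and]
      rcases i with a | k
      · obtain ⟨y, rfl⟩ := u.surjective a
        by_cases hy : y = x
        · exact Or.inl (by rw [hy])
        · refine Or.inr ⟨by simp, ?_⟩
          rw [hu] at hi ⊢
          simpa [Satisfies, hy] using hi
      · refine Or.inr ⟨fun h => hj (h ▸ hi), ?_⟩
        obtain ⟨⟨y, c⟩, hl, hc⟩ := hi
        have hc' : c = false := (h2 k).2 _ hl
        subst hc'
        refine ⟨_, hl, ?_⟩
        by_cases hy : y = x
        · simp [hy]
        · simpa [hy] using hc
    calc satCount F τ ≤ _ := Finset.card_le_card hsub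
      _ ≤ _ := Finset.card_insert_le _ _
      _ = satCount F (Function.update τ x false) := Finset.card_erase_add_one hj'
  have hmax : satCount F (Function.update τ x false) ≤ satMax F :=
    Finset.le_sup (f := fun τ : V → Bool => satCount F τ) (Finset.mem_univ _)
  have hcard := hmin (Function.update τ x false) (by simp; omega)
  refine absurd hcard (not_le.mpr (Finset.card_lt_card ?_))
  rw [Finset.ssubset_iff_of_subset]
  · exact ⟨x, by simp [hτx], by simp⟩
  · intro y hy
    by_cases hyx : y = x
    · simp [hyx] at hy
    · simpa [hyx] using hy
end

section
/- Let H be a hypergraph with vertex type U and nonempty edges e : J → Finset U, let m = |J|, and let k be a natural number. Then H has a hitting set S with |S| + k ≤ m if and only if H has a k-mini-hitting set. -/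
open scoped Classical

/-!
Write `E[S]` for the set of edges met by `S`.

A mini-hitting set `S` becomes a hitting set of size at most `|S| + (m - |E[S]|) ≤ m - k` by adding
one vertex from each edge that `S` misses.

Conversely, a hitting set `S` with `|S| + k ≤ m` contains a mini-hitting set, built greedily: for
each `i ≤ k` there is `T ⊆ S` with `|T| ≤ i` and `|E[T]| ≥ |T| + i` (`exists_mini_subset`). When the
second inequality has no slack, some `v ∈ S \ T` meets at least two edges outside `E[T]`, and `v` is
added to `T`; otherwise the edges outside `E[T]` would number at most `|S \ T|`, giving
`m ≤ |S| + i`, which is impossible for `i < k`.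
-/

/-- The set `E[S]` of edge indices whose edge meets `S`. -/
noncomputable def hitEdges {U J : Type*} [Fintype J] (e : J → Finset U) (S : Finset U) :
    Finset J :=
  Finset.univ.filter fun j : J => ∃ v ∈ S, v ∈ e j

theorem mem_hitEdges {U J : Type*} [Fintype J] (e : J → Finset U) (S : Finset U) (j : J) :
    j ∈ hitEdges e S ↔ ∃ v ∈ S, v ∈ e j := by
  simp [hitEdges]

theorem exists_mini_subset {U J : Type*} [Fintype J]
    (e : J → Finset U) (k : ℕ) (S : Finset U) (hS : ∀ j : J, ∃ v ∈ S, v ∈ e j)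
    (hk : S.card + k ≤ Fintype.card J) (i : ℕ) (hi : i ≤ k) :
    ∃ T ⊆ S, T.card ≤ i ∧ T.card + i ≤ (hitEdges e T).card := by
  induction i with
  | zero => exact ⟨∅, by simp⟩
  | succ i ih =>
    obtain ⟨T, hTS, hTi, hTE⟩ := ih (by omega)
    by_cases hslack : T.card + (i + 1) ≤ (hitEdges e T).card
    · exact ⟨T, hTS, by omega, hslack⟩
    by_cases hgain : ∃ v ∈ S \ T, 2 ≤ (hitEdges e {v} \ hitEdges e T).card
    · obtain ⟨v, hv, hv2⟩ := hgain
      rw [Finset.mem_sdiff] at hv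
      refine ⟨insert v T, Finset.insert_subset hv.1 hTS, ?_, ?_⟩
      · rw [Finset.card_insert_of_notMem hv.2]; omega
      · have hE : hitEdges e (insert v T) =
            hitEdges e T ∪ (hitEdges e {v} \ hitEdges e T) := by
          ext j
          rw [Finset.union_sdiff_self_eq_union]
          simp only [Finset.mem_union, mem_hitEdges, Finset.exists_mem_insert,
            Finset.mem_singleton, exists_eq_left]
          exact or_comm
        rw [Finset.card_insert_of_notMem hv.2, hE,
          Finset.card_union_of_disjoint Finset.disjoint_sdiff]
        omega
    · push Not at hgain
      have hcover : (Finset.univ : Finset J) ⊆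
          hitEdges e T ∪ (S \ T).biUnion fun v => hitEdges e {v} \ hitEdges e T := by
        intro j _
        by_cases hj : j ∈ hitEdges e T
        · exact Finset.mem_union_left _ hj
        · obtain ⟨v, hvS, hvj⟩ := hS j
          have hvT : v ∉ T := fun h => hj ((mem_hitEdges e T j).2 ⟨v, h, hvj⟩)
          refine Finset.mem_union_right _ (Finset.mem_biUnion.2
            ⟨v, Finset.mem_sdiff.2 ⟨hvS, hvT⟩, Finset.mem_sdiff.2 ⟨?_, hj⟩⟩)
          exact (mem_hitEdges e {v} j).2 ⟨v, Finset.mem_singleton_self v, hvj⟩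
      have h1 := (Finset.card_le_card hcover).trans (Finset.card_union_le _ _)
      have h2 : ((S \ T).biUnion fun v => hitEdges e {v} \ hitEdges e T).card ≤
          (S \ T).card * 1 :=
        Finset.card_biUnion_le_card_mul _ _ _ fun v hv => by have := hgain v hv; omega
      have h3 := Finset.card_sdiff_add_card_eq_card hTS
      rw [Finset.card_univ] at h1
      omega

/-- A hypergraph has a hitting set of size at most `m - k` if and only if it has a
`k`-mini-hitting set, i.e. a set `S` of vertices with `|S| ≤ k` and `|E[S]| ≥ |S| + k`. -/
theorem stmt13 {U J : Type*} [Fintype U] [Fintype J]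
    (e : J → Finset U) (he : ∀ j, (e j).Nonempty) (k : ℕ) :
    (∃ S : Finset U, (∀ j : J, ∃ v ∈ S, v ∈ e j) ∧ S.card + k ≤ Fintype.card J) ↔
    (∃ S : Finset U, S.card ≤ k ∧
      S.card + k ≤ (Finset.univ.filter fun j : J => ∃ v ∈ S, v ∈ e j).card) := by
  constructor
  · rintro ⟨S, hS, hk⟩
    obtain ⟨T, -, hT⟩ := exists_mini_subset e k S hS hk k le_rfl
    exact ⟨T, hT⟩
  · rintro ⟨S, -, hE⟩
    change _ ≤ (hitEdges e S).card at hE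
    choose f hf using he
    refine ⟨S ∪ (hitEdges e S)ᶜ.image f, fun j => ?_, ?_⟩
    · by_cases hj : j ∈ hitEdges e S
      · obtain ⟨v, hv, hvj⟩ := (mem_hitEdges e S j).1 hj
        exact ⟨v, Finset.mem_union_left _ hv, hvj⟩
      · exact ⟨f j, Finset.mem_union_right _
          (Finset.mem_image_of_mem f (Finset.mem_compl.2 hj)), hf j⟩
    · have h1 := Finset.card_union_le S ((hitEdges e S)ᶜ.image f)
      have h2 : ((hitEdges e S)ᶜ.image f).card ≤ (hitEdges e S)ᶜ.card := Finset.card_image_le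
      have h3 := Finset.card_add_card_compl (hitEdges e S)
      omega
end

section
/- Let H be a hypergraph with vertex type U and nonempty edges e : J → Finset U, and let k be a natural number. Then H has a k-mini-hitting set if and only if there exist a natural number p with p ≤ k, positive integers a₁, …, a_p with a₁ + ⋯ + a_p = p + k, pairwise distinct vertices w₁, …, w_p ∈ U, and pairwise disjoint sets J₁, …, J_p ⊆ J with |J_t| = a_t and w_t ∈ e j for every j ∈ J_t and every t. -/
/-!
A mini-hitting set `S` is turned into a disjoint family by letting each edge meeting `S` choose one
vertex `f j` of `S` on it. Let `T ⊆ S` be the set of chosen vertices; the edges meeting `S` number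
at least `|S| + k ≥ |T| + k`. One edge in each fibre of `f` over `T` gives `|T|` edges, which extend
to a set `R` of exactly `|T| + k` edges meeting `S`. The fibres of `f` restricted to `R` are
disjoint, nonempty, and their sizes add up to `|T| + k`. Conversely, the vertices `w t` form a
mini-hitting set, because all edges in the disjoint union of the sets `Js t` meet it.
-/

open scoped Classical

/-- A hypergraph has a `k`-mini-hitting set if and only if there are `p ≤ k` distinct
vertices `w₁, …, w_p`, positive integers `a₁ + ⋯ + a_p = p + k`, and pairwise disjoint
sets of edge indices `J₁, …, J_p` with `|J_t| = a_t` and `w_t` belonging to every edge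
indexed by `J_t`. -/
theorem stmt14 {U J : Type*} [Fintype U] [Fintype J]
    (e : J → Finset U) (he : ∀ j, (e j).Nonempty) (k : ℕ) :
    (∃ S : Finset U, S.card ≤ k ∧
      S.card + k ≤ (Finset.univ.filter fun j : J => ∃ v ∈ S, v ∈ e j).card) ↔
    (∃ (p : ℕ) (a : Fin p → ℕ) (w : Fin p → U) (Js : Fin p → Finset J),
      p ≤ k ∧ (∀ t, 1 ≤ a t) ∧ (∑ t, a t) = p + k ∧
      Function.Injective w ∧
      (∀ s t : Fin p, s ≠ t → Disjoint (Js s) (Js t)) ∧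
      (∀ t, (Js t).card = a t) ∧
      (∀ t, ∀ j ∈ Js t, w t ∈ e j)) := by
  constructor
  · rintro ⟨S, hSk, hS⟩
    set E := Finset.univ.filter fun j : J => ∃ v ∈ S, v ∈ e j with hE
    -- The default value of `f` off `E` is an arbitrary vertex of the edge.
    have hf : ∀ j, ∃ v, v ∈ e j ∧ (j ∈ E → v ∈ S) := by
      intro j
      by_cases hj : j ∈ E
      · obtain ⟨v, hvS, hv⟩ := (Finset.mem_filter.1 hj).2
        exact ⟨v, hv, fun _ => hvS⟩
      · obtain ⟨v, hv⟩ := he j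
        exact ⟨v, hv, fun h => absurd h hj⟩
    choose f hfe hfS using hf
    set T := E.image f with hT
    have hTS : T ⊆ S := Finset.image_subset_iff.2 fun j hj => hfS j hj
    have hTcard : T.card ≤ S.card := Finset.card_le_card hTS
    have hg : ∀ t : T, ∃ j ∈ E, f j = t := fun t => Finset.mem_image.1 t.2
    choose g hgE hgf using hg
    have hG : (Finset.univ.image g).card ≤ T.card + k :=
      Finset.card_image_le.trans (by simp)
    have hGE : Finset.univ.image g ⊆ E := Finset.image_subset_iff.2 fun t _ => hgE t
    obtain ⟨R, hGR, hRE, hR⟩ :=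
      Finset.exists_subsuperset_card_eq hGE hG (by omega : T.card + k ≤ E.card)
    let w : Fin T.card ≃ T := T.equivFin.symm
    refine ⟨T.card, fun t => (R.filter fun j => f j = w t).card, fun t => w t,
      fun t => R.filter fun j => f j = w t, hTcard.trans hSk, ?_, ?_, ?_, ?_, fun _ => rfl, ?_⟩
    · intro t
      exact Finset.card_pos.2 ⟨g (w t), Finset.mem_filter.2
        ⟨hGR (Finset.mem_image_of_mem g (Finset.mem_univ _)), hgf _⟩⟩
    · rw [← hR, w.sum_comp (fun t : T => (R.filter fun j => f j = t).card),
        Finset.sum_coe_sort T (fun t => (R.filter fun j => f j = t).card)]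
      exact (Finset.card_eq_sum_card_fiberwise fun j hj =>
        Finset.mem_image_of_mem f (hRE hj)).symm
    · exact Subtype.val_injective.comp w.injective
    · intro s t hst
      refine Finset.disjoint_left.2 fun j hs ht => hst (w.injective (Subtype.ext ?_))
      exact (Finset.mem_filter.1 hs).2.symm.trans (Finset.mem_filter.1 ht).2
    · intro t j hj
      change (w t : U) ∈ e j
      rw [← (Finset.mem_filter.1 hj).2]
      exact hfe j
  · rintro ⟨p, a, w, Js, hpk, -, hsum, hw, hdisj, hcard, hmem⟩
    have hwp : (Finset.univ.image w).card = p := by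
      simp [Finset.card_image_of_injective _ hw]
    refine ⟨Finset.univ.image w, hwp.trans_le hpk, ?_⟩
    rw [hwp, ← hsum, ← Finset.sum_congr rfl fun t _ => hcard t,
      ← Finset.card_biUnion fun s _ t _ hst => hdisj s t hst]
    refine Finset.card_le_card fun j hj => ?_
    obtain ⟨t, -, ht⟩ := Finset.mem_biUnion.1 hj
    exact Finset.mem_filter.2 ⟨Finset.mem_univ _, w t,
      Finset.mem_image_of_mem w (Finset.mem_univ _), hmem t j ht⟩
end

section
/- Let p(s) denote the number of partitions of the natural number s. Then p(s) ∼ e^{π√(2s/3)}/(4s√3) as s → ∞; that is, the ratio p(s) · (4s√3) / e^{π√(2s/3)} tends to 1 as s tends to infinity. -/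
open scoped Classical

/-!
The proof is the saddle point (circle) method with a single circle.

Let `P(q) = ∏ (1 - q ^ k)` be Euler's product, so that `1 / P` generates the partition numbers.
Cauchy's formula on the circle `|q| = e^{-t}` reads
`2π p(n) = ∫_{-π}^{π} P(e^{-(t - iθ)})⁻¹ e^{n (t - iθ)} dθ` (`card_partition_eq_integral`).

The transformation of Dedekind's eta function under `τ ↦ -1/τ` gives
`1 / P(e^{-w}) = √(w / 2π) e^{-w/24} e^{π² / (6w)} / P(e^{-4π² / w})` (`eulerProd_functional`).
Hence the integrand behaves like `√(w / 2π) e^{π² / (6w) + n w}` with `w = t - iθ`, whose saddle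
point is `t = π / √(6n)`. Put `t = s²` and `θ = u s³`. Divided by its size at the saddle point, the
integrand converges pointwise to `exp (-(π² / 6) u²)` as `s → 0⁺` (`tendsto_scaled`).

The passage to the limit under the integral needs a majorant valid on the whole circle, minor arcs
included. Comparing the logarithmic series of the factors gives
`|P(z)| ≥ P(|z|) exp (1 / (1 - |z|) - Re 1 / (1 - z))` for `|z| < 1` (`norm_eulerProd_ge`), and the
exponent is large enough to dominate the rescaled integrand by a multiple of `1 / (1 + u²)`
(`majorant`). The integral therefore tends to the Gaussian integral `√(6 / π)`
(`tendsto_integral_scaled`), and collecting constants gives the asymptotic formula.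
-/

open Complex Filter Topology MeasureTheory
open scoped Real

namespace HardyRamanujan

/-! ### Cauchy's formula for the partition numbers -/

/-- Euler's product `∏_{n ≥ 1} (1 - q ^ n)`, whose inverse is the generating function of `p`.
As a `tprod` it is meaningful for `‖q‖ < 1`. -/
noncomputable def eulerProd (q : ℂ) : ℂ := ∏' n : ℕ, (1 - q ^ (n + 1))

/-- The formal geometric series `∑_j X ^ ((i + 1) j) = 1 / (1 - X ^ (i + 1))`, the factor of the
generating function that records the parts equal to `i + 1`. -/
noncomputable def geomSeries (i : ℕ) : PowerSeries ℂ :=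
  PowerSeries.mk fun m ↦ if (i + 1) ∣ m then 1 else 0

open PowerSeries.WithPiTopology in
lemma tsum_X_pow_eq_geomSeries (i : ℕ) :
    ∑' j : ℕ, (PowerSeries.X : PowerSeries ℂ) ^ ((i + 1) * j) = geomSeries i := by
  have h := PowerSeries.hasSum_of_monomials_self (geomSeries i)
  have hinj : Function.Injective (fun j : ℕ ↦ (i + 1) * j) :=
    fun a b hab ↦ Nat.eq_of_mul_eq_mul_left (Nat.succ_pos i) hab
  rw [← hinj.hasSum_iff] at h
  · rw [← h.tsum_eq]
    refine tsum_congr fun j ↦ ?_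
    simp [geomSeries, PowerSeries.X_pow_eq]
  · intro m hm
    have : ¬ (i + 1) ∣ m := fun ⟨k, hk⟩ ↦ hm ⟨k, hk.symm⟩
    simp [geomSeries, this]

lemma norm_lt_one_pow {q : ℂ} (hq : ‖q‖ < 1) (i : ℕ) : ‖q ^ (i + 1)‖ < 1 := by
  rw [norm_pow]; exact pow_lt_one₀ (norm_nonneg _) hq (Nat.succ_ne_zero i)

lemma one_sub_pow_ne_zero {q : ℂ} (hq : ‖q‖ < 1) (i : ℕ) : 1 - q ^ (i + 1) ≠ 0 := by
  intro h
  have h1 := norm_lt_one_pow hq i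
  rw [← sub_eq_zero.mp h] at h1
  simp at h1

lemma hasSum_geomSeries {q : ℂ} (hq : ‖q‖ < 1) (i : ℕ) :
    HasSum (fun m ↦ (geomSeries i).coeff m * q ^ m) (1 - q ^ (i + 1))⁻¹ := by
  have h := hasSum_geometric_of_norm_lt_one (norm_lt_one_pow hq i)
  have hinj : Function.Injective (fun j : ℕ ↦ (i + 1) * j) :=
    fun a b hab ↦ Nat.eq_of_mul_eq_mul_left (Nat.succ_pos i) hab
  rw [← hinj.hasSum_iff]
  · refine h.congr_fun fun j ↦ ?_
    simp [geomSeries, pow_mul]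
  · intro m hm
    have : ¬ (i + 1) ∣ m := fun ⟨k, hk⟩ ↦ hm ⟨k, hk.symm⟩
    simp [geomSeries, this]

/-- The formal product of the first `N` geometric series converges absolutely in the unit disc, to
the product of their analytic sums. -/
lemma partialProd_series {q : ℂ} (hq : ‖q‖ < 1) (N : ℕ) :
    Summable (fun m ↦ ‖(∏ i ∈ Finset.range N, geomSeries i).coeff m * q ^ m‖) ∧
    ∑' m, (∏ i ∈ Finset.range N, geomSeries i).coeff m * q ^ m =
      (∏ i ∈ Finset.range N, (1 - q ^ (i + 1)))⁻¹ := by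
  induction N with
  | zero =>
    constructor
    · refine summable_of_ne_finset_zero (s := {0}) fun m hm ↦ ?_
      simp [PowerSeries.coeff_one, Finset.mem_singleton.not.mp hm]
    · rw [tsum_eq_single 0]
      · simp
      · intro m hm
        simp [PowerSeries.coeff_one, hm]
  | succ N ih =>
    have hg := hasSum_geomSeries hq N
    have hg' := hg.summable.norm
    have key : ∀ m, (∏ i ∈ Finset.range (N + 1), geomSeries i).coeff m * q ^ m =
        ∑ kl ∈ Finset.HasAntidiagonal.antidiagonal m,
          ((∏ i ∈ Finset.range N, geomSeries i).coeff kl.1 * q ^ kl.1) *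
          ((geomSeries N).coeff kl.2 * q ^ kl.2) := by
      intro m
      rw [Finset.prod_range_succ, PowerSeries.coeff_mul, Finset.sum_mul]
      refine Finset.sum_congr rfl fun kl hkl ↦ ?_
      rw [← Finset.HasAntidiagonal.mem_antidiagonal.mp hkl, pow_add]
      ring
    have h1 := summable_norm_sum_mul_antidiagonal_of_summable_norm ih.1 hg'
    have h2 := tsum_mul_tsum_eq_tsum_sum_antidiagonal_of_summable_norm ih.1 hg'
    simp_rw [← key] at h1 h2
    refine ⟨h1, ?_⟩
    rw [← h2, ih.2, hg.tsum_eq, Finset.prod_range_succ, mul_inv]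

open PowerSeries.WithPiTopology in
/-- The coefficients of the partial products of the generating function converge to `p n` (they
count the partitions of `n` with parts at most `N`). -/
lemma tendsto_coeff_partialProd (n : ℕ) :
    Tendsto (fun N ↦ (∏ i ∈ Finset.range N, geomSeries i).coeff n) atTop
      (𝓝 (Fintype.card (Nat.Partition n) : ℂ)) := by
  have h := Nat.Partition.hasProd_powerSeriesMk_card_restricted ℂ (fun _ ↦ True)
  simp only [if_true, tsum_X_pow_eq_geomSeries] at h
  have h2 := (tendsto_iff_coeff_tendsto _ _ _ _).mp h.tendsto_prod_nat n
  simpa [Nat.Partition.restricted, Finset.card_univ] using h2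

lemma norm_exp_neg (t θ : ℝ) : ‖cexp (-(t - θ * I))‖ = Real.exp (-t) := by
  simp [Complex.norm_exp]

lemma integral_cexp_int (k : ℤ) :
    ∫ θ in (-π)..π, cexp (k * I * θ) = if k = 0 then (2 * π : ℂ) else 0 := by
  split_ifs with hk
  · subst hk
    simp
    ring
  · have hk' : (k : ℂ) * I ≠ 0 := by simp [hk]
    rw [integral_exp_mul_complex hk']
    have : cexp (k * I * (π : ℝ)) = cexp (k * I * ((-π : ℝ) : ℂ)) := by
      rw [Complex.exp_eq_exp_iff_exists_int]
      exact ⟨k, by push_cast; ring⟩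
    rw [this, sub_self, zero_div]

/-- Cauchy's coefficient formula on the circle `|q| = e^{-t}`, for an absolutely convergent power
series evaluated at `q = e^{-(t - iθ)}`. -/
lemma integral_series (a : ℕ → ℂ) {t : ℝ} (n : ℕ)
    (ha : Summable fun m ↦ ‖a m * (Real.exp (-t) : ℂ) ^ m‖) :
    ∫ θ in (-π)..π, (∑' m, a m * cexp (-(t - θ * I)) ^ m) * cexp (n * (t - θ * I)) =
      2 * π * a n := by
  have hsum := intervalIntegral.hasSum_integral_of_dominated_convergence
    (μ := volume) (a := -π) (b := π)
    (F := fun m (θ : ℝ) ↦ a m * cexp (-(t - θ * I)) ^ m * cexp (n * (t - θ * I)))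
    (f := fun θ : ℝ ↦ (∑' m, a m * cexp (-(t - θ * I)) ^ m) * cexp (n * (t - θ * I)))
    (fun m _ ↦ ‖a m * (Real.exp (-t) : ℂ) ^ m‖ * Real.exp (n * t))
    (fun m ↦ Continuous.aestronglyMeasurable (by fun_prop))
    (fun m ↦ Eventually.of_forall fun θ _ ↦ by
      rw [norm_mul, norm_mul, norm_pow, norm_exp_neg, norm_mul, norm_pow, Complex.norm_real,
        Real.norm_of_nonneg (Real.exp_pos _).le]
      simp [Complex.norm_exp])
    (Eventually.of_forall fun θ _ ↦ ha.mul_right _)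
    (by simp)
    (Eventually.of_forall fun θ _ ↦ by
      refine HasSum.mul_right _ (Summable.hasSum (Summable.of_norm ?_))
      convert ha using 2 with m
      rw [norm_mul, norm_pow, norm_exp_neg, norm_mul, norm_pow, Complex.norm_real,
        Real.norm_of_nonneg (Real.exp_pos _).le])
  have hterm : ∀ m : ℕ,
      ∫ θ in (-π)..π, a m * cexp (-(t - θ * I)) ^ m * cexp (n * (t - θ * I)) =
        if m = n then 2 * π * a n else 0 := by
    intro m
    have : ∀ θ : ℝ, a m * cexp (-(t - θ * I)) ^ m * cexp (n * (t - θ * I)) =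
        a m * cexp ((n - m) * t) * cexp (((m - n : ℤ) : ℂ) * I * θ) := by
      intro θ
      rw [← Complex.exp_nat_mul, mul_assoc, mul_assoc, ← Complex.exp_add, ← Complex.exp_add]
      congr 2
      push_cast
      ring
    simp_rw [this]
    rw [intervalIntegral.integral_const_mul, integral_cexp_int]
    rcases eq_or_ne m n with rfl | h
    · simp
      ring
    · have h' : (m : ℤ) - n ≠ 0 := by omega
      simp [h, h']
  simp_rw [hterm] at hsum
  rw [← hsum.tsum_eq]
  simp

lemma tendsto_partialProd {q : ℂ} (hq : ‖q‖ < 1) :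
    Tendsto (fun N ↦ ∏ i ∈ Finset.range N, (1 - q ^ (i + 1))) atTop (𝓝 (eulerProd q)) :=
  (ModularForm.multipliable_one_sub_pow hq).hasProd.tendsto_prod_nat

lemma eulerProd_ne_zero {q : ℂ} (hq : ‖q‖ < 1) : eulerProd q ≠ 0 := by
  unfold eulerProd
  simp_rw [sub_eq_add_neg]
  refine tprod_one_add_ne_zero_of_summable (f := fun n ↦ -q ^ (n + 1)) ?_ ?_
  · intro i
    simpa [sub_eq_add_neg] using one_sub_pow_ne_zero hq i
  · simpa using (summable_nat_add_iff 1).mpr (summable_geometric_of_lt_one (norm_nonneg _) hq)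

lemma norm_one_sub_norm_pow_le {q : ℂ} (hq : ‖q‖ < 1) (i : ℕ) :
    ‖1 - (‖q‖ : ℂ) ^ (i + 1)‖ ≤ ‖1 - q ^ (i + 1)‖ := by
  have h1 : ‖1 - (‖q‖ : ℂ) ^ (i + 1)‖ = 1 - ‖q‖ ^ (i + 1) := by
    rw [← Complex.ofReal_pow, ← Complex.ofReal_one, ← Complex.ofReal_sub, Complex.norm_real,
      Real.norm_of_nonneg]
    have := norm_lt_one_pow hq i
    rw [norm_pow] at this
    linarith
  rw [h1]
  have := norm_sub_norm_le (1 : ℂ) (q ^ (i + 1))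
  simpa using this

/-- Cauchy's formula for `p n`. It is first applied to the finite partial products, where the power
series is an explicit Cauchy product; the limit in `N` is taken by dominated convergence, the
integrand being largest at `θ = 0`. -/
lemma card_partition_eq_integral {t : ℝ} (ht : 0 < t) (n : ℕ) :
    ∫ θ in (-π)..π, (eulerProd (cexp (-(t - θ * I))))⁻¹ * cexp (n * (t - θ * I)) =
      2 * π * (Fintype.card (Nat.Partition n) : ℂ) := by
  have hr : Real.exp (-t) < 1 := by simpa using ht
  have hq : ∀ θ : ℝ, ‖cexp (-(t - θ * I))‖ < 1 := fun θ ↦ by rw [norm_exp_neg]; exact hr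
  have hr' : ‖(Real.exp (-t) : ℂ)‖ < 1 := by
    rw [Complex.norm_real, Real.norm_of_nonneg (Real.exp_pos _).le]; exact hr
  have h1 : Tendsto (fun N ↦ ∫ θ in (-π)..π,
      (∏ i ∈ Finset.range N, (1 - cexp (-(t - θ * I)) ^ (i + 1)))⁻¹ * cexp (n * (t - θ * I)))
      atTop (𝓝 (2 * π * (Fintype.card (Nat.Partition n) : ℂ))) := by
    refine ((tendsto_coeff_partialProd n).const_mul (2 * π : ℂ)).congr fun N ↦ ?_
    rw [← integral_series _ n (partialProd_series hr' N).1]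
    refine intervalIntegral.integral_congr fun θ _ ↦ ?_
    simp only [(partialProd_series (hq θ) N).2]
  refine tendsto_nhds_unique ?_ h1
  obtain ⟨C, hC⟩ := ((tendsto_partialProd hr').inv₀ (eulerProd_ne_zero hr')).norm.bddAbove_range
  refine intervalIntegral.tendsto_integral_filter_of_dominated_convergence
    (fun _ ↦ C * Real.exp (n * t)) ?_ ?_ (by simp) ?_
  · refine Eventually.of_forall fun N ↦ Continuous.aestronglyMeasurable ?_
    refine Continuous.mul (Continuous.inv₀ (by fun_prop) fun θ ↦ ?_) (by fun_prop)
    exact Finset.prod_ne_zero_iff.mpr fun i _ ↦ one_sub_pow_ne_zero (hq θ) i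
  · refine Eventually.of_forall fun N ↦ Eventually.of_forall fun θ _ ↦ ?_
    rw [norm_mul]
    refine mul_le_mul ?_ (by simp [Complex.norm_exp]) (norm_nonneg _) ?_
    · refine le_trans ?_ (hC ⟨N, rfl⟩)
      simp only [norm_inv, norm_prod]
      refine inv_anti₀ (Finset.prod_pos fun i _ ↦
        norm_pos_iff.mpr (one_sub_pow_ne_zero hr' i)) ?_
      refine Finset.prod_le_prod (fun i _ ↦ norm_nonneg _) fun i _ ↦ ?_
      have := norm_one_sub_norm_pow_le (hq θ) i
      rwa [norm_exp_neg] at this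
    · exact (norm_nonneg _).trans (hC ⟨0, rfl⟩)
  · exact Eventually.of_forall fun θ _ ↦
      ((tendsto_partialProd (hq θ)).inv₀ (eulerProd_ne_zero (hq θ))).mul_const _

/-! ### The modular relation and the pointwise limit at the saddle point -/

/-- Dedekind's `η` at `τ = i w / (2π)`, for which `e^{2πiτ} = e^{-w}`. -/
lemma eta_eq (w : ℂ) :
    ModularForm.eta (I * w / (2 * π)) = cexp (-w / 24) * eulerProd (cexp (-w)) := by
  have hpi : (π : ℂ) ≠ 0 := by exact_mod_cast Real.pi_ne_zero
  unfold ModularForm.eta eulerProd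
  have h1 : Function.Periodic.qParam 24 (I * w / (2 * π)) = cexp (-w / 24) := by
    unfold Function.Periodic.qParam
    congr 1
    push_cast
    field_simp
    linear_combination w * I_sq
  have h2 : ∀ n : ℕ, ModularForm.eta_q n (I * w / (2 * π)) = cexp (-w) ^ (n + 1) := by
    intro n
    rw [ModularForm.eta_q_eq_pow]
    congr 2
    field_simp
    linear_combination w * I_sq
  simp_rw [h1, h2]

/-- The modular relation `η(-1/τ) = √(-iτ) η(τ)` at `τ = i w / (2π)`, written for Euler's product;
the substitution `τ ↦ -1/τ` becomes `w ↦ 4π² / w`. -/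
lemma eulerProd_functional {w : ℂ} (hw : 0 < w.re) :
    (eulerProd (cexp (-w)))⁻¹ =
      (sqrt I)⁻¹ * sqrt (I * w / (2 * π)) * cexp (-w / 24) * cexp (π ^ 2 / (6 * w)) *
        (eulerProd (cexp (-(4 * π ^ 2 / w))))⁻¹ := by
  have hpi : (π : ℂ) ≠ 0 := by exact_mod_cast Real.pi_ne_zero
  have hw0 : w ≠ 0 := by rintro rfl; simp at hw
  have him : I * w / (2 * π) ∈ UpperHalfPlane.upperHalfPlaneSet := by
    change 0 < (I * w / (2 * π)).im
    have : I * w / (2 * π) = I * w / ((2 * π : ℝ) : ℂ) := by push_cast; rfl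
    rw [this, Complex.div_ofReal_im]
    simp
    positivity
  have h := ModularForm.eta_comp_eq_csqrt_I_inv him
  have h3 : -1 / (I * w / (2 * π)) = I * (4 * π ^ 2 / w) / (2 * π) := by
    field_simp
    linear_combination -4 * I_sq
  simp only [Function.comp_apply, Pi.smul_apply, Pi.mul_apply, smul_eq_mul] at h
  rw [h3, eta_eq, eta_eq] at h
  have hre : 0 < (4 * π ^ 2 / w : ℂ).re := by
    have : (4 * π ^ 2 / w : ℂ) = ((4 * π ^ 2 : ℝ) : ℂ) * w⁻¹ := by push_cast; rfl
    rw [this, Complex.re_ofReal_mul, Complex.inv_re]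
    have := Complex.normSq_pos.mpr hw0
    positivity
  have hn : ∀ z : ℂ, 0 < z.re → ‖cexp (-z)‖ < 1 := fun z hz ↦ by
    simpa [Complex.norm_exp] using hz
  have e1 := eulerProd_ne_zero (hn _ hw)
  have e2 := eulerProd_ne_zero (hn _ hre)
  have hexp : cexp (-(4 * π ^ 2 / w) / 24) * cexp (π ^ 2 / (6 * w)) = 1 := by
    rw [← Complex.exp_add, Complex.exp_eq_one_iff]
    exact ⟨0, by field_simp; simp; ring⟩
  rw [eq_mul_inv_iff_mul_eq₀ e2, inv_mul_eq_iff_eq_mul₀ e1]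
  linear_combination cexp (π ^ 2 / (6 * w)) * h - eulerProd (cexp (-(4 * π ^ 2 / w))) * hexp

lemma sqrt_ofReal_mul {a : ℝ} (ha : 0 < a) {z : ℂ} (hz : z ≠ 0) :
    sqrt (a * z) = √a * sqrt z := by
  have ha0 : (a : ℂ) ≠ 0 := by exact_mod_cast ha.ne'
  rw [Complex.sqrt, Complex.sqrt, cpow_def_of_ne_zero (mul_ne_zero ha0 hz),
    cpow_def_of_ne_zero hz, Complex.log_ofReal_mul ha hz, add_mul, Complex.exp_add]
  congr 1
  rw [Real.sqrt_eq_rpow, Real.rpow_def_of_pos ha]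
  push_cast
  norm_num

lemma tendsto_eulerProd_zero : Tendsto eulerProd (𝓝 0) (𝓝 1) := by
  have h := (ModularForm.differentiableOn_tprod_one_sub_pow.differentiableAt
    (Metric.isOpen_ball.mem_nhds (by simp : (0 : ℂ) ∈ Metric.ball (0 : ℂ) 1))).continuousAt
  have h2 : Tendsto eulerProd (𝓝 0) (𝓝 (eulerProd 0)) := h
  simpa [eulerProd] using h2

/-- The rescaled integrand of Cauchy's formula for `n = π² / (6 s⁴)`. The saddle point of
`e^{π² / (6 t) + n t}` is `t = s²`, where the exponent equals `π² / (3 s²)`; the fluctuations there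
live on the scale `θ = u s³`, so that `t - iθ = s² (1 - i u s)`. The prefactor removes the size
`s / √(2π) · e^{π² / (3 s²)}` of the integrand at the saddle point. -/
noncomputable def scaled (s u : ℝ) : ℂ :=
  (√(2 * π) / s : ℝ) * Real.exp (-(π ^ 2 / (3 * s ^ 2))) *
    ((eulerProd (cexp (-(s ^ 2 * (1 - u * s * I)))))⁻¹ *
      cexp (π ^ 2 / (6 * s ^ 4) * (s ^ 2 * (1 - u * s * I))))

/-- Near the saddle point the integrand becomes Gaussian: after the modular relation the exponent is
exactly `-(π² / 6) u² / (1 - i u s)`, and all remaining factors tend to constants. -/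
lemma tendsto_scaled (u : ℝ) :
    Tendsto (fun s ↦ scaled s u) (𝓝[>] 0) (𝓝 (Real.exp (-(π ^ 2 / 6) * u ^ 2))) := by
  have hpi : (π : ℂ) ≠ 0 := by exact_mod_cast Real.pi_ne_zero
  have hlim : ∀ f : ℝ → ℂ, Continuous f → Tendsto f (𝓝[>] 0) (𝓝 (f 0)) := fun f hf ↦
    (hf.tendsto 0).mono_left nhdsWithin_le_nhds
  have hz : ∀ s : ℝ, (1 - u * s * I : ℂ) ≠ 0 := fun s h ↦ by
    have := congrArg Complex.re h
    simp at this
  have key : ∀ s : ℝ, 0 < s → scaled s u =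
      (√(2 * π) : ℂ) * (sqrt I)⁻¹ * sqrt (I * (1 - u * s * I) / (2 * π)) *
        cexp (-(s ^ 2 * (1 - u * s * I)) / 24) *
        cexp (-(π ^ 2 / 6) * u ^ 2 / (1 - u * s * I)) *
        (eulerProd (cexp (-(4 * π ^ 2 / (s ^ 2 * (1 - u * s * I))))))⁻¹ := by
    intro s hs
    have hs0 : (s : ℂ) ≠ 0 := by exact_mod_cast hs.ne'
    have hre : 0 < ((s : ℂ) ^ 2 * (1 - u * s * I)).re := by
      rw [← Complex.ofReal_pow, Complex.re_ofReal_mul]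
      simp
      positivity
    have hsqrt : sqrt (I * (s ^ 2 * (1 - u * s * I)) / (2 * π)) =
        s * sqrt (I * (1 - u * s * I) / (2 * π)) := by
      have : I * (s ^ 2 * (1 - u * s * I)) / (2 * π) =
          ((s ^ 2 : ℝ) : ℂ) * (I * (1 - u * s * I) / (2 * π)) := by push_cast; ring
      rw [this, sqrt_ofReal_mul (by positivity), Real.sqrt_sq hs.le]
      exact div_ne_zero (mul_ne_zero I_ne_zero (hz s)) (by simp [hpi])
    have hexp : cexp (π ^ 2 / (6 * (s ^ 2 * (1 - u * s * I)))) *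
        cexp (π ^ 2 / (6 * s ^ 4) * (s ^ 2 * (1 - u * s * I))) *
        cexp (-(π ^ 2 / (3 * s ^ 2))) =
        cexp (-(π ^ 2 / 6) * u ^ 2 / (1 - u * s * I)) := by
      rw [← Complex.exp_add, ← Complex.exp_add]
      congr 1
      have hz0 := hz s
      have hus : (u : ℂ) ^ 2 * s ^ 2 = -(1 - (1 - u * s * I)) ^ 2 := by
        linear_combination (u : ℂ) ^ 2 * s ^ 2 * I_sq
      -- in terms of `z = 1 - i u s` the claim is `1 / z + z - 2 = (1 - z)² / z`
      generalize (1 - u * s * I : ℂ) = z at hz0 hus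
      field_simp
      linear_combination 3 * hus
    unfold scaled
    rw [eulerProd_functional hre, hsqrt, ← hexp]
    push_cast
    field_simp
  have h1 : Tendsto (fun s : ℝ ↦ sqrt (I * (1 - u * s * I) / (2 * π))) (𝓝[>] 0)
      (𝓝 (sqrt (I / (2 * π)))) := by
    have hmem : I / (2 * π) ∈ slitPlane := by
      rw [Complex.mem_slitPlane_iff]
      right
      have : I / (2 * π) = I / ((2 * π : ℝ) : ℂ) := by push_cast; rfl
      rw [this, Complex.div_ofReal_im]
      simp [Real.pi_ne_zero]
    refine ((differentiableAt_sqrt hmem).continuousAt.tendsto).comp ?_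
    simpa using hlim (fun s ↦ I * (1 - u * s * I) / (2 * π)) (by fun_prop)
  have h2 := hlim (fun s ↦ cexp (-(s ^ 2 * (1 - u * s * I)) / 24)) (by fun_prop)
  have h3 := hlim (fun s ↦ cexp (-(π ^ 2 / 6) * u ^ 2 / (1 - u * s * I)))
    (by fun_prop (disch := exact hz _))
  have h4 : Tendsto (fun s : ℝ ↦ cexp (-(4 * π ^ 2 / (s ^ 2 * (1 - u * s * I))))) (𝓝[>] 0)
      (𝓝 0) := by
    rw [tendsto_zero_iff_norm_tendsto_zero]
    have hnorm : ∀ s : ℝ, ‖cexp (-(4 * π ^ 2 / (s ^ 2 * (1 - u * s * I))))‖ =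
        Real.exp (-(4 * π ^ 2 * (s ^ 2 * (1 + u ^ 2 * s ^ 2))⁻¹)) := by
      intro s
      have : (4 * π ^ 2 / (s ^ 2 * (1 - u * s * I)) : ℂ) =
          ((4 * π ^ 2 / s ^ 2 : ℝ) : ℂ) * (1 - u * s * I)⁻¹ := by
        push_cast; field_simp
      rw [Complex.norm_exp, Complex.neg_re, this, Complex.re_ofReal_mul, Complex.inv_re]
      simp only [Complex.normSq_apply]
      simp
      field_simp
    simp_rw [hnorm]
    refine Real.tendsto_exp_neg_atTop_nhds_zero.comp ?_
    refine Tendsto.const_mul_atTop (by positivity) (Tendsto.comp tendsto_inv_nhdsGT_zero ?_)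
    refine tendsto_nhdsWithin_iff.mpr ⟨?_, ?_⟩
    · have : Continuous fun s : ℝ ↦ s ^ 2 * (1 + u ^ 2 * s ^ 2) := by fun_prop
      simpa using (this.tendsto 0).mono_left nhdsWithin_le_nhds
    · filter_upwards [self_mem_nhdsWithin] with s hs
      have : 0 < s := hs
      exact Set.mem_Ioi.mpr (by positivity)
  have h5 := (tendsto_eulerProd_zero.comp h4).inv₀ one_ne_zero
  have hfin := (((h1.const_mul ((√(2 * π) : ℂ) * (sqrt I)⁻¹)).mul h2).mul h3).mul h5
  have hval : (√(2 * π) : ℂ) * (sqrt I)⁻¹ * sqrt (I / (2 * π)) = 1 := by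
    have e : I / (2 * π) = (((2 * π)⁻¹ : ℝ) : ℂ) * I := by push_cast; field_simp
    have hI : sqrt I ≠ 0 := by simp [Complex.sqrt]
    have h2 : (√(2 * π) : ℂ) * (√((2 * π)⁻¹) : ℝ) = 1 := by
      rw [← Complex.ofReal_mul, ← Real.sqrt_mul (by positivity), mul_inv_cancel₀ (by positivity)]
      simp
    rw [e, sqrt_ofReal_mul (by positivity) I_ne_zero]
    linear_combination h2 +
      (√(2 * π) : ℂ) * (√((2 * π)⁻¹) : ℝ) * inv_mul_cancel₀ hI
  rw [hval] at hfin
  refine Tendsto.congr' (f₁ := _) ?_ (by convert hfin using 2; simp)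
  filter_upwards [self_mem_nhdsWithin] with s hs
  rw [key s hs]
  rfl

/-! ### A majorant on the whole circle -/

/-- In `-log(1 - ‖z‖) + Re log(1 - z) = ∑ (‖z‖ ^ k - Re z ^ k) / k` every term is nonnegative, so the
left side is at least its first term. -/
lemma norm_one_sub_ge {z : ℂ} (hz : ‖z‖ < 1) :
    ‖1 - (‖z‖ : ℂ)‖ * Real.exp (‖z‖ - z.re) ≤ ‖1 - z‖ := by
  have hr : |‖z‖| < 1 := by rwa [abs_norm]
  have h1 := Real.hasSum_pow_div_log_of_abs_lt_one hr
  have h2 := Complex.hasSum_re (Complex.hasSum_taylorSeries_neg_log' hz)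
  have h3 := h1.sub h2
  have hne : 1 - z ≠ 0 := by simpa using one_sub_pow_ne_zero hz 0
  have hterm : ∀ n : ℕ, 0 ≤ ‖z‖ ^ (n + 1) / ((n : ℝ) + 1) - (z ^ (n + 1) / ((n : ℂ) + 1)).re := by
    intro n
    have h5 := Complex.re_le_norm (z ^ (n + 1) / ((n : ℂ) + 1))
    have h6 : ‖(n : ℂ) + 1‖ = (n : ℝ) + 1 := by
      rw [show (n : ℂ) + 1 = ((n + 1 : ℕ) : ℂ) by push_cast; rfl, Complex.norm_natCast]
      push_cast; rfl
    rw [norm_div, norm_pow, h6] at h5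
    linarith
  have h4 := le_hasSum h3 0 (fun n _ ↦ hterm n)
  simp only [zero_add, pow_one, Nat.cast_zero, div_one, Complex.neg_re, Complex.log_re] at h4
  have hpos : 0 < 1 - ‖z‖ := by linarith
  have h7 : ‖1 - (‖z‖ : ℂ)‖ = 1 - ‖z‖ := by
    rw [← Complex.ofReal_one, ← Complex.ofReal_sub, Complex.norm_real, Real.norm_of_nonneg hpos.le]
  rw [h7, ← Real.log_le_log_iff (by positivity) (norm_pos_iff.mpr hne),
    Real.log_mul hpos.ne' (Real.exp_ne_zero _), Real.log_exp]
  linarith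

/-- The previous inequality at `z, z², z³, …`, multiplied together: the exponents sum to a difference
of geometric series. -/
lemma norm_eulerProd_ge {z : ℂ} (hz : ‖z‖ < 1) :
    ‖eulerProd ‖z‖‖ * Real.exp ((1 - ‖z‖)⁻¹ - (1 - z)⁻¹.re) ≤ ‖eulerProd z‖ := by
  have hr : ‖(‖z‖ : ℂ)‖ < 1 := by simpa using hz
  have hs1 := (hasSum_geometric_of_lt_one (norm_nonneg z) hz).sub
    (Complex.hasSum_re (hasSum_geometric_of_norm_lt_one hz))
  rw [← hasSum_nat_add_iff' 1] at hs1
  simp only [Finset.range_one, Finset.sum_singleton, pow_zero, Complex.one_re, sub_self,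
    sub_zero] at hs1
  refine le_of_tendsto_of_tendsto ((tendsto_partialProd hr).norm.mul
    ((Real.continuous_exp.tendsto _).comp hs1.tendsto_sum_nat)) (tendsto_partialProd hz).norm
    (Eventually.of_forall fun N ↦ ?_)
  simp only [Function.comp_apply, norm_prod, Real.exp_sum, ← Finset.prod_mul_distrib]
  refine Finset.prod_le_prod (fun i _ ↦ by positivity) fun i _ ↦ ?_
  have := norm_one_sub_ge (norm_lt_one_pow hz i)
  simpa using this

lemma re_gap {r θ : ℝ} (hr0 : 0 < r) (hr : r < 1) :
    (1 - r)⁻¹ - (1 - (r : ℂ) * cexp (θ * I))⁻¹.re =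
      r * (1 + r) * (1 - Real.cos θ) / ((1 - r) * ((1 - r) ^ 2 + 2 * r * (1 - Real.cos θ))) := by
  have hc := Real.cos_le_one θ
  have h1 : 0 < 1 - r := by linarith
  have hden : 0 < (1 - r) ^ 2 + 2 * r * (1 - Real.cos θ) := by
    have : 0 ≤ 1 - Real.cos θ := by linarith
    positivity
  have hns : Complex.normSq (1 - (r : ℂ) * cexp (θ * I)) =
      (1 - r) ^ 2 + 2 * r * (1 - Real.cos θ) := by
    rw [Complex.normSq_apply]
    simp [Complex.exp_ofReal_mul_I_re, Complex.exp_ofReal_mul_I_im]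
    linear_combination r ^ 2 * Real.sin_sq_add_cos_sq θ
  have hre : (1 - (r : ℂ) * cexp (θ * I)).re = 1 - r * Real.cos θ := by
    simp [Complex.exp_ofReal_mul_I_re]
  rw [Complex.inv_re, hns, hre]
  have hD : 2 * r * Real.cos θ =
      (1 - r) ^ 2 + 2 * r - ((1 - r) ^ 2 + 2 * r * (1 - Real.cos θ)) := by ring
  generalize (1 - r) ^ 2 + 2 * r * (1 - Real.cos θ) = D at hden hD
  field_simp
  linear_combination hD

/-- Lower bound for the gap in terms of `θ²`, from `1 - cos θ ≥ 2θ² / π²` and `1 / 3 ≤ e^{-t}`,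
`1 - e^{-t} ≤ t` for `t ≤ 1`. -/
lemma re_gap_ge {t θ : ℝ} (ht : 0 < t) (ht1 : t ≤ 1) (hθ : |θ| ≤ π) :
    (1 / 3) * (2 / π ^ 2 * θ ^ 2) / (t * (t ^ 2 + 2 * (2 / π ^ 2 * θ ^ 2))) ≤
      (1 - Real.exp (-t))⁻¹ - (1 - (Real.exp (-t) : ℂ) * cexp (θ * I))⁻¹.re := by
  have hr0 := Real.exp_pos (-t)
  have hr1 : Real.exp (-t) < 1 := by simpa using ht
  rw [re_gap hr0 hr1]
  have hcos := Real.cos_le_one_sub_mul_cos_sq hθ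
  have hrt : 1 - Real.exp (-t) ≤ t := by linarith [Real.add_one_le_exp (-t)]
  have hr3 : 1 / 3 ≤ Real.exp (-t) := by
    have h1 : Real.exp (-1) ≤ Real.exp (-t) := Real.exp_le_exp.mpr (by linarith)
    have h2 : Real.exp 1 < 3 := by linarith [Real.exp_one_lt_d9]
    rw [Real.exp_neg] at h1
    have : (3 : ℝ)⁻¹ ≤ (Real.exp 1)⁻¹ := inv_anti₀ (Real.exp_pos _) h2.le
    linarith
  set r := Real.exp (-t)
  set y := 2 / π ^ 2 * θ ^ 2 with hy
  have hy0 : 0 ≤ y := by positivity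
  set c := 1 - Real.cos θ with hc
  have hyc : y ≤ c := by linarith
  have h1r : 0 < 1 - r := by linarith
  have hc0 : 0 ≤ c := by linarith
  calc (1 / 3) * y / (t * (t ^ 2 + 2 * y)) ≤ (1 / 3) * c / (t * (t ^ 2 + 2 * c)) := by
        rw [div_le_div_iff₀ (by positivity) (by positivity)]
        nlinarith [mul_le_mul_of_nonneg_left hyc (by positivity : 0 ≤ t ^ 3)]
    _ ≤ r * (1 + r) * c / ((1 - r) * ((1 - r) ^ 2 + 2 * r * c)) := by
        gcongr ?_ / ?_
        · have : 1 / 3 ≤ r * (1 + r) := by nlinarith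
          gcongr
        · have : (1 - r) ^ 2 + 2 * r * c ≤ t ^ 2 + 2 * c := by
            have : r * c ≤ c := by nlinarith
            nlinarith
          gcongr

lemma exp_neg_le_inv_cube {x : ℝ} (hx : 0 < x) : Real.exp (-x) ≤ 6 / x ^ 3 := by
  have h := Real.pow_div_factorial_le_exp x hx.le 3
  rw [Real.exp_neg, inv_eq_one_div, div_le_div_iff₀ (Real.exp_pos _) (by positivity)]
  norm_num [Nat.factorial] at h
  linarith

/-- The off-centre decay of the generating function, on the scale `t = s²`, `θ = u s³`, is bounded
by an integrable function of `u` uniformly in `s`. -/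
lemma majorant : ∃ C : ℝ, ∀ s u : ℝ, 0 < s → s ≤ 1 → |u * s ^ 3| ≤ π →
    Real.exp (-((1 - Real.exp (-s ^ 2))⁻¹ -
      (1 - (Real.exp (-s ^ 2) : ℂ) * cexp ((u * s ^ 3 : ℝ) * I))⁻¹.re)) ≤ C * (1 + u ^ 2)⁻¹ := by
  -- a crude constant, larger than the `6 · 48 ^ 3 · 2 · 16` needed in the second case below
  refine ⟨100000000, fun s u hs hs1 hu ↦ ?_⟩
  have hgap := re_gap_ge (t := s ^ 2) (by positivity) (pow_le_one₀ hs.le hs1) hu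
  have hpi3 := Real.pi_gt_three
  have hpi4 := Real.pi_le_four
  have hπ2 : π ^ 2 ≤ 16 := by nlinarith
  have hus : u ^ 2 * s ^ 6 ≤ 16 := by
    have := sq_le_sq' (by linarith [neg_abs_le (u * s ^ 3)] : -π ≤ u * s ^ 3)
      ((le_abs_self _).trans hu)
    nlinarith
  have hA : u ^ 2 / (24 * (1 + u ^ 2 * s ^ 2)) ≤
      1 / 3 * (2 / π ^ 2 * (u * s ^ 3) ^ 2) /
        (s ^ 2 * ((s ^ 2) ^ 2 + 2 * (2 / π ^ 2 * (u * s ^ 3) ^ 2))) := by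
    have : 1 / 3 * (2 / π ^ 2 * (u * s ^ 3) ^ 2) /
        (s ^ 2 * ((s ^ 2) ^ 2 + 2 * (2 / π ^ 2 * (u * s ^ 3) ^ 2))) =
        2 * u ^ 2 / (3 * (π ^ 2 + 4 * (u ^ 2 * s ^ 2))) := by
      field_simp
      ring
    rw [this, div_le_div_iff₀ (by positivity) (by positivity)]
    have h0 : 0 ≤ u ^ 2 := sq_nonneg u
    have h1 : 0 ≤ u ^ 2 * s ^ 2 := by positivity
    nlinarith [mul_nonneg h0 h1]
  refine (Real.exp_le_exp.mpr (neg_le_neg (hA.trans hgap))).trans ?_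
  rw [← div_eq_mul_inv]
  -- for `|u s| ≤ 1` the gap is at least `u² / 48`; otherwise it is at least `1 / (48 s²)`, and
  -- `|u| s³ ≤ π` turns the resulting power `s⁶` into decay in `u`
  rcases le_or_gt (u ^ 2 * s ^ 2) 1 with h | h
  · have h1 : u ^ 2 / 48 ≤ u ^ 2 / (24 * (1 + u ^ 2 * s ^ 2)) := by gcongr; linarith
    have h2 : 1 + u ^ 2 / 48 ≤ Real.exp (u ^ 2 / (24 * (1 + u ^ 2 * s ^ 2))) := by
      linarith [Real.add_one_le_exp (u ^ 2 / (24 * (1 + u ^ 2 * s ^ 2)))]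
    rw [Real.exp_neg, inv_eq_one_div, div_le_div_iff₀ (Real.exp_pos _) (by positivity)]
    nlinarith [sq_nonneg u]
  · have h1 : 1 / (48 * s ^ 2) ≤ u ^ 2 / (24 * (1 + u ^ 2 * s ^ 2)) := by
      rw [div_le_div_iff₀ (by positivity) (by positivity)]
      nlinarith
    have hu1 : 1 ≤ u ^ 2 := by
      have : s ^ 2 ≤ 1 := pow_le_one₀ hs.le hs1
      nlinarith [sq_nonneg u]
    refine (Real.exp_le_exp.mpr (neg_le_neg h1)).trans
      ((exp_neg_le_inv_cube (by positivity)).trans ?_)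
    have : 6 / (1 / (48 * s ^ 2)) ^ 3 = 6 * 48 ^ 3 * s ^ 6 := by field_simp
    rw [this, le_div_iff₀ (by positivity)]
    have : 0 < s ^ 6 := by positivity
    nlinarith

/-! ### Passage to the limit -/

lemma norm_scaled_le {s u : ℝ} (hs : 0 < s) :
    ‖scaled s u‖ ≤ ‖scaled s 0‖ * Real.exp (-((1 - Real.exp (-s ^ 2))⁻¹ -
      (1 - (Real.exp (-s ^ 2) : ℂ) * cexp ((u * s ^ 3 : ℝ) * I))⁻¹.re)) := by
  set g := (1 - Real.exp (-s ^ 2))⁻¹ -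
      (1 - (Real.exp (-s ^ 2) : ℂ) * cexp ((u * s ^ 3 : ℝ) * I))⁻¹.re with hg
  have hz : cexp (-(s ^ 2 * (1 - u * s * I))) =
      (Real.exp (-s ^ 2) : ℂ) * cexp ((u * s ^ 3 : ℝ) * I) := by
    push_cast
    rw [← Complex.exp_add]
    congr 1
    ring
  have hz0 : cexp (-(s ^ 2 * (1 - (0 : ℝ) * s * I))) = (Real.exp (-s ^ 2) : ℂ) := by
    push_cast
    congr 1
    ring
  have hnz : ‖(Real.exp (-s ^ 2) : ℂ) * cexp ((u * s ^ 3 : ℝ) * I)‖ = Real.exp (-s ^ 2) := by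
    rw [norm_mul, Complex.norm_exp_ofReal_mul_I, mul_one, Complex.norm_real,
      Real.norm_of_nonneg (Real.exp_pos _).le]
  have hr : Real.exp (-s ^ 2) < 1 := by
    rw [Real.exp_lt_one_iff]
    have : 0 < s ^ 2 := by positivity
    linarith
  have hge := norm_eulerProd_ge (z := (Real.exp (-s ^ 2) : ℂ) * cexp ((u * s ^ 3 : ℝ) * I))
    (by rw [hnz]; exact hr)
  rw [hnz, ← hg] at hge
  have hpos : 0 < ‖eulerProd (Real.exp (-s ^ 2) : ℂ)‖ := by
    refine norm_pos_iff.mpr (eulerProd_ne_zero ?_)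
    rwa [Complex.norm_real, Real.norm_of_nonneg (Real.exp_pos _).le]
  have hinv : ‖eulerProd ((Real.exp (-s ^ 2) : ℂ) * cexp ((u * s ^ 3 : ℝ) * I))‖⁻¹ ≤
      ‖eulerProd (Real.exp (-s ^ 2) : ℂ)‖⁻¹ * Real.exp (-g) := by
    rw [Real.exp_neg g, ← mul_inv]
    exact inv_anti₀ (by positivity) hge
  have hexp : ‖cexp (π ^ 2 / (6 * s ^ 4) * (s ^ 2 * (1 - u * s * I)))‖ =
      ‖cexp (π ^ 2 / (6 * s ^ 4) * (s ^ 2 * (1 - (0 : ℝ) * s * I)))‖ := by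
    have : (π ^ 2 / (6 * s ^ 4) * (s ^ 2 * (1 - u * s * I)) : ℂ) =
        ((π ^ 2 / (6 * s ^ 4) * s ^ 2 : ℝ) : ℂ) * (1 - u * s * I) := by push_cast; ring
    have h0 : (π ^ 2 / (6 * s ^ 4) * (s ^ 2 * (1 - (0 : ℝ) * s * I)) : ℂ) =
        ((π ^ 2 / (6 * s ^ 4) * s ^ 2 : ℝ) : ℂ) := by push_cast; ring
    rw [Complex.norm_exp, Complex.norm_exp, this, h0, Complex.re_ofReal_mul]
    congr 1
    simp [-Complex.ofReal_mul, -Complex.ofReal_div]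
  unfold scaled
  rw [hz, hz0]
  simp only [norm_mul, norm_inv]
  rw [hexp]
  set A := ‖((√(2 * π) / s : ℝ) : ℂ)‖
  set B := ‖((Real.exp (-(π ^ 2 / (3 * s ^ 2))) : ℝ) : ℂ)‖
  set K := ‖cexp (π ^ 2 / (6 * s ^ 4) * (s ^ 2 * (1 - (0 : ℝ) * s * I)))‖
  have hA : 0 ≤ A := norm_nonneg _
  have hB : 0 ≤ B := norm_nonneg _
  have hK : 0 ≤ K := norm_nonneg _
  calc A * B * (_ * K) ≤ A * B * ((‖eulerProd (Real.exp (-s ^ 2) : ℂ)‖⁻¹ * Real.exp (-g)) * K) := by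
        gcongr
    _ = _ := by ring

lemma continuous_scaled {s : ℝ} (hs : 0 < s) : Continuous (scaled s) := by
  unfold scaled
  have hq : ∀ u : ℝ, ‖cexp (-(s ^ 2 * (1 - u * s * I)))‖ < 1 := by
    intro u
    have : (s ^ 2 * (1 - u * s * I) : ℂ) = (s ^ 2 : ℝ) - (u * s ^ 3 : ℝ) * I := by push_cast; ring
    rw [this, norm_exp_neg, Real.exp_lt_one_iff]
    have : 0 < s ^ 2 := by positivity
    linarith
  refine continuous_const.mul (Continuous.mul (Continuous.inv₀ ?_ fun u ↦
    eulerProd_ne_zero (hq u)) (by fun_prop))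
  refine ContinuousOn.comp_continuous
    (ModularForm.differentiableOn_tprod_one_sub_pow.continuousOn) (by fun_prop) fun u ↦ ?_
  simpa using hq u

/-- Dominated convergence: the integral over the whole circle tends to
`∫ exp (-(π² / 6) u²) du = √(6 / π)`. -/
lemma tendsto_integral_scaled :
    Tendsto (fun s : ℝ ↦ ∫ u in (-π / s ^ 3)..(π / s ^ 3), scaled s u) (𝓝[>] 0)
      (𝓝 (√(6 / π) : ℝ)) := by
  obtain ⟨C, hC⟩ := majorant
  have hgauss : ∫ u : ℝ, ((Real.exp (-(π ^ 2 / 6) * u ^ 2) : ℝ) : ℂ) = (√(6 / π) : ℝ) := by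
    rw [integral_complex_ofReal, integral_gaussian]
    congr 2
    field_simp
  rw [← hgauss]
  have hI : (fun s : ℝ ↦ ∫ u in (-π / s ^ 3)..(π / s ^ 3), scaled s u) =ᶠ[𝓝[>] 0]
      fun s ↦ ∫ u, (Set.Ioc (-π / s ^ 3) (π / s ^ 3)).indicator (scaled s) u := by
    filter_upwards [self_mem_nhdsWithin] with s hs
    have hs : 0 < s := hs
    rw [intervalIntegral.integral_of_le, integral_indicator measurableSet_Ioc]
    gcongr
    linarith [Real.pi_pos]
  refine Tendsto.congr' hI.symm ?_
  have hC0 : 0 ≤ C := by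
    have := (Real.exp_pos _).le.trans (hC 1 0 one_pos le_rfl (by simp [Real.pi_pos.le]))
    simpa using this
  have h2 : ∀ᶠ s in 𝓝[>] (0 : ℝ), ‖scaled s 0‖ ≤ 2 := by
    have := (tendsto_scaled 0).norm
    simp only [Complex.norm_real] at this
    refine (this.eventually_lt_const (u := 2) ?_).mono fun s hs ↦ hs.le
    simp
  have h1 : ∀ᶠ s in 𝓝[>] (0 : ℝ), s < 1 :=
    mem_nhdsWithin_of_mem_nhds (Iio_mem_nhds one_pos)
  refine tendsto_integral_filter_of_dominated_convergence
    (fun u ↦ 2 * (C * (1 + u ^ 2)⁻¹)) ?_ ?_ ?_ ?_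
  · filter_upwards [self_mem_nhdsWithin] with s hs
    exact (continuous_scaled hs).aestronglyMeasurable.indicator measurableSet_Ioc
  · filter_upwards [self_mem_nhdsWithin, h1, h2] with s hs hs1 hs2
    have hs : 0 < s := hs
    refine Eventually.of_forall fun u ↦ ?_
    by_cases hu : u ∈ Set.Ioc (-π / s ^ 3) (π / s ^ 3)
    · rw [Set.indicator_of_mem hu]
      have hs3 : 0 < s ^ 3 := by positivity
      have hu' : |u * s ^ 3| ≤ π := by
        rw [abs_le]
        constructor
        · have := (div_lt_iff₀ hs3).mp hu.1
          linarith
        · exact (le_div_iff₀ hs3).mp hu.2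
      refine (norm_scaled_le hs).trans ?_
      exact mul_le_mul hs2 (hC s u hs hs1.le hu') (Real.exp_pos _).le (by norm_num)
    · rw [Set.indicator_of_notMem hu, norm_zero]
      positivity
  · exact (integrable_inv_one_add_sq.const_mul C).const_mul 2
  · refine Eventually.of_forall fun u ↦ ?_
    refine (tendsto_scaled u).congr' ?_
    have hlim : Tendsto (fun s : ℝ ↦ |u| * s ^ 3) (𝓝[>] 0) (𝓝 0) := by
      have : Continuous fun s : ℝ ↦ |u| * s ^ 3 := by fun_prop
      simpa using (this.tendsto 0).mono_left nhdsWithin_le_nhds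
    filter_upwards [self_mem_nhdsWithin, hlim.eventually_lt_const Real.pi_pos] with s hs hus
    have hs : 0 < s := hs
    have hs3 : 0 < s ^ 3 := by positivity
    rw [Set.indicator_of_mem]
    refine ⟨(div_lt_iff₀ hs3).mpr ?_, (le_div_iff₀ hs3).mpr ?_⟩
    · nlinarith [neg_abs_le u]
    · nlinarith [le_abs_self u]

/-- Cauchy's formula on the circle of radius `e^{-s²}` through the saddle point, after the
substitution `θ = u s³`. -/
lemma card_eq_integral_scaled {n : ℕ} {s : ℝ} (hs : 0 < s) (hn : (n : ℝ) = π ^ 2 / (6 * s ^ 4)) :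
    (Fintype.card (Nat.Partition n) : ℂ) =
      (s ^ 4 / (2 * π * √(2 * π)) * Real.exp (π ^ 2 / (3 * s ^ 2)) : ℝ) *
        ∫ u in (-π / s ^ 3)..(π / s ^ 3), scaled s u := by
  have hpi : (π : ℂ) ≠ 0 := by exact_mod_cast Real.pi_ne_zero
  have hs0 : (s : ℂ) ≠ 0 := by exact_mod_cast hs.ne'
  have hn' : (n : ℂ) = π ^ 2 / (6 * s ^ 4) := by exact_mod_cast congrArg ((↑) : ℝ → ℂ) hn
  have h := card_partition_eq_integral (t := s ^ 2) (by positivity) n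
  have hsub := intervalIntegral.smul_integral_comp_mul_right (a := -π / s ^ 3) (b := π / s ^ 3)
    (fun θ : ℝ ↦ (eulerProd (cexp (-(((s ^ 2 : ℝ) : ℂ) - θ * I))))⁻¹ *
      cexp (n * (((s ^ 2 : ℝ) : ℂ) - θ * I))) (s ^ 3)
  rw [div_mul_cancel₀ _ (by positivity), div_mul_cancel₀ _ (by positivity), h] at hsub
  have hw : √(2 * π) ≠ 0 := by positivity
  have hpt : ∀ u : ℝ, (eulerProd (cexp (-(((s ^ 2 : ℝ) : ℂ) - (u * s ^ 3 : ℝ) * I))))⁻¹ *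
      cexp (n * (((s ^ 2 : ℝ) : ℂ) - (u * s ^ 3 : ℝ) * I)) =
      (s / √(2 * π) * Real.exp (π ^ 2 / (3 * s ^ 2)) : ℝ) * scaled s u := by
    intro u
    have e1 : ((s ^ 2 : ℝ) : ℂ) - (u * s ^ 3 : ℝ) * I = s ^ 2 * (1 - u * s * I) := by
      push_cast; ring
    have e2 : (s / √(2 * π) * Real.exp (π ^ 2 / (3 * s ^ 2))) *
        (√(2 * π) / s * Real.exp (-(π ^ 2 / (3 * s ^ 2)))) = 1 := by
      rw [Real.exp_neg]
      field_simp
    have e3 := congrArg ((↑) : ℝ → ℂ) e2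
    rw [Complex.ofReal_mul, Complex.ofReal_mul (√(2 * π) / s), Complex.ofReal_one] at e3
    rw [e1, hn', scaled, ← mul_assoc (Complex.ofReal (s / √(2 * π) * _)), e3, one_mul]
  simp_rw [hpt] at hsub
  rw [intervalIntegral.integral_const_mul, Complex.real_smul] at hsub
  have h2pi : (2 * π : ℂ) ≠ 0 := by simp [hpi]
  rw [← mul_right_inj' h2pi, ← hsub, ← mul_assoc, ← mul_assoc]
  congr 1
  push_cast
  field_simp

end HardyRamanujan

open HardyRamanujan

/-- Hardy–Ramanujan asymptotic for the partition function:
`p(s) ∼ e^{π √(2s/3)} / (4 s √3)` as `s → ∞`, i.e. the ratio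
`p(s) · 4 s √3 / e^{π √(2s/3)}` tends to 1. -/
theorem stmt15 :
    Filter.Tendsto (fun s : ℕ =>
      (Fintype.card (Nat.Partition s) : ℝ) * (4 * (s : ℝ) * Real.sqrt 3) /
        Real.exp (Real.pi * Real.sqrt (2 * (s : ℝ) / 3)))
      Filter.atTop (nhds 1) := by
  have hpi := Real.pi_pos
  -- `s = √(π / √(6 n))` is the positive solution of `n = π² / (6 s⁴)`
  have hsn : Tendsto (fun n : ℕ ↦ √(π / √(6 * n))) atTop (𝓝[>] 0) := by
    refine tendsto_nhdsWithin_iff.mpr ⟨?_, ?_⟩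
    · have h1 : Tendsto (fun n : ℕ ↦ √(6 * (n : ℝ))) atTop atTop :=
        Real.tendsto_sqrt_atTop.comp
          (tendsto_natCast_atTop_atTop.const_mul_atTop (by norm_num))
      have h2 := (Real.continuous_sqrt.tendsto 0).comp (h1.const_div_atTop π)
      rwa [Real.sqrt_zero] at h2
    · filter_upwards [eventually_gt_atTop 0] with n hn
      have : (0 : ℝ) < n := by exact_mod_cast hn
      exact Set.mem_Ioi.mpr (by positivity)
  have hlim := (tendsto_integral_scaled.comp hsn).const_mul
    ((π * √3 / (3 * √(2 * π)) : ℝ) : ℂ)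
  have hone : ((π * √3 / (3 * √(2 * π)) : ℝ) : ℂ) * (√(6 / π) : ℝ) = ((1 : ℝ) : ℂ) := by
    rw [← Complex.ofReal_mul]
    congr 1
    have e1 : √(2 * π) = √2 * √π := Real.sqrt_mul (by norm_num) _
    have e2 : √(6 / π) = √2 * √3 / √π := by
      rw [Real.sqrt_div (by norm_num), ← Real.sqrt_mul (by norm_num)]
      norm_num
    rw [e1, e2]
    have h3 : √3 ^ 2 = 3 := Real.sq_sqrt (by norm_num)
    have hp : √π ^ 2 = π := Real.sq_sqrt hpi.le
    have hp0 : √π ≠ 0 := by positivity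
    field_simp
    rw [h3, hp, mul_comm]
  rw [hone] at hlim
  have hre := (Complex.continuous_re.tendsto _).comp hlim
  rw [Complex.ofReal_re] at hre
  refine hre.congr' ?_
  filter_upwards [eventually_gt_atTop 0] with n hn
  have hn0 : (0 : ℝ) < n := by exact_mod_cast hn
  set s := √(π / √(6 * n)) with hs
  have hs0 : 0 < s := by positivity
  have h6 : √(6 * (n : ℝ)) ^ 2 = 6 * n := Real.sq_sqrt (by positivity)
  have hs2 : s ^ 2 = π / √(6 * n) := Real.sq_sqrt (by positivity)
  have hs4 : s ^ 4 = π ^ 2 / (6 * n) := by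
    rw [show s ^ 4 = (s ^ 2) ^ 2 by ring, hs2, div_pow, h6]
  have hns : (n : ℝ) = π ^ 2 / (6 * s ^ 4) := by
    rw [hs4]
    field_simp
  have hexp : π ^ 2 / (3 * s ^ 2) = π * √(2 * n / 3) := by
    have : √(2 * (n : ℝ) / 3) = √(6 * n) / 3 := by
      rw [Real.sqrt_eq_iff_mul_self_eq (by positivity) (by positivity), ← sq, div_pow, h6]
      ring
    rw [hs2, this]
    field_simp
  have hcard := congrArg Complex.re (card_eq_integral_scaled hs0 hns)
  rw [Complex.natCast_re, Complex.re_ofReal_mul, hs4, hexp] at hcard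
  simp only [Function.comp_apply]
  rw [Complex.re_ofReal_mul, hcard, ← hs]
  generalize (∫ u in (-π / s ^ 3)..(π / s ^ 3), scaled s u).re = J
  field_simp
  ring
end

section
/- Let H be a hypergraph with finite vertex type U, n = |U|, and nonempty edges e : J → Finset U. Define a CNF formula F over the variables U with index set U ⊕ J by F(inl x) = {(x, true)} for x ∈ U and F(inr j) = {(v, false) : v ∈ e j} for j ∈ J. Then ν(F) = n, and for every natural number k, H has a hitting set S with |S| + k ≤ |J| if and only if sat(F) ≥ n + k. -/
/-!
A matching has at most one pair per variable, and the pairs `(x, inl x)` form a matching, so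
`ν(F) = n`.  For the equivalence, `satCount_eq` splits the count of satisfied clauses: writing
`T = {x | τ x = false}`, an assignment satisfies `n - |T|` unit clauses and exactly those edge
clauses whose edge meets `T`.  A hitting set `S` thus gives an assignment (false exactly on `S`)
satisfying `n - |S| + |J|` clauses.  Conversely, for an optimal assignment, adding to `T` one
vertex from each edge that misses it yields a hitting set of size at most
`|T| + #{missed edges}`, which is `n + |J|` minus the number of satisfied clauses.
-/

open scoped Classical

/-- In additive form, the number of satisfied clauses is `(n - |T|) + (|J| - #missed)`, where `T`
is the set of false variables and an edge is missed if it is disjoint from `T`. -/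
lemma satCount_eq {U J : Type*} [Fintype U] [Fintype J]
    (e : J → Finset U) (F : U ⊕ J → Finset (U × Bool))
    (hF1 : ∀ x : U, F (Sum.inl x) = {(x, true)})
    (hF2 : ∀ j : J, F (Sum.inr j) = (e j).image fun v => (v, false)) (τ : U → Bool) :
    satCount F τ + ((Finset.univ.filter fun x => τ x = false).card +
      (Finset.univ.filter fun j => ¬ ∃ v ∈ e j, τ v = false).card) =
      Fintype.card U + Fintype.card J := by
  have h : satCount F τ = (Finset.univ.filter fun x => ¬ τ x = false).card +
      (Finset.univ.filter fun j => ∃ v ∈ e j, τ v = false).card := by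
    unfold satCount
    rw [Finset.card_filter, Fintype.sum_sum_type, Finset.card_filter, Finset.card_filter]
    simp [Satisfies, hF1, hF2]
  have h1 := Finset.card_filter_add_card_filter_not (s := (Finset.univ : Finset U))
    (fun x => τ x = false)
  have h2 := Finset.card_filter_add_card_filter_not (s := (Finset.univ : Finset J))
    (fun j => ∃ v ∈ e j, τ v = false)
  rw [Finset.card_univ] at h1 h2
  omega

lemma matchNum_eq_card_s16 {U J : Type*} [Fintype U] [Fintype J]
    (F : U ⊕ J → Finset (U × Bool)) (hF1 : ∀ x : U, F (Sum.inl x) = {(x, true)}) :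
    matchNum F = Fintype.card U := by
  apply le_antisymm
  · refine Finset.sup_le fun M hM => ?_
    have hM' := (Finset.mem_filter.1 hM).2
    refine Finset.card_le_card_of_injOn (t := Finset.univ) Prod.fst (by simp) ?_
    intro p hp q hq hpq
    by_contra hne
    exact (hM'.2 p hp q hq hne).1 hpq
  · have hinj : Function.Injective fun x : U => (x, (Sum.inl x : U ⊕ J)) :=
      fun a b h => (Prod.ext_iff.1 h).1
    have hM : Finset.univ.image (fun x : U => (x, (Sum.inl x : U ⊕ J))) ∈
        Finset.univ.filter fun M : Finset (U × (U ⊕ J)) => IsMatching F M := by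
      refine Finset.mem_filter.2 ⟨Finset.mem_univ _, ?_, ?_⟩
      · intro p hp
        obtain ⟨x, -, rfl⟩ := Finset.mem_image.1 hp
        exact ⟨true, by simp [hF1]⟩
      · intro p hp q hq hne
        obtain ⟨x, -, rfl⟩ := Finset.mem_image.1 hp
        obtain ⟨y, -, rfl⟩ := Finset.mem_image.1 hq
        have hxy : x ≠ y := fun h => hne (by rw [h])
        exact ⟨hxy, fun h => hxy (Sum.inl.inj h)⟩
    have := Finset.le_sup (f := Finset.card) hM
    rwa [Finset.card_image_of_injective _ hinj, Finset.card_univ] at this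

/-- The reduction from `(m-k)`-Hitting Set to `(ν(F)+k)`-SAT: for the formula `F` with a
unit positive clause per vertex and a purely negative clause per hyperedge, `ν(F) = n`,
and the hypergraph has a hitting set of size at most `|J| - k` iff `sat(F) ≥ n + k`. -/
theorem stmt16 {U J : Type*} [Fintype U] [Fintype J]
    (e : J → Finset U) (he : ∀ j, (e j).Nonempty)
    (F : U ⊕ J → Finset (U × Bool))
    (hF1 : ∀ x : U, F (Sum.inl x) = {(x, true)})
    (hF2 : ∀ j : J, F (Sum.inr j) = (e j).image fun v => (v, false)) :
    matchNum F = Fintype.card U ∧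
    ∀ k : ℕ,
      (∃ S : Finset U, (∀ j : J, ∃ v ∈ S, v ∈ e j) ∧ S.card + k ≤ Fintype.card J) ↔
      Fintype.card U + k ≤ satMax F := by
  refine ⟨matchNum_eq_card_s16 F hF1, fun k => ⟨?_, fun h => ?_⟩⟩
  · rintro ⟨S, hS, hk⟩
    have hc := satCount_eq e F hF1 hF2 fun x => decide (x ∉ S)
    have h1 : (Finset.univ.filter fun x => decide (x ∉ S) = false) = S := by
      ext x; simp
    have h2 : (Finset.univ.filter fun j => ¬ ∃ v ∈ e j, decide (v ∉ S) = false) = ∅ := by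
      refine Finset.filter_eq_empty_iff.2 fun j _ hj => hj ?_
      obtain ⟨v, hv, hvj⟩ := hS j
      exact ⟨v, hvj, by simpa using hv⟩
    rw [h1, h2, Finset.card_empty] at hc
    have hle : satCount F (fun x => decide (x ∉ S)) ≤ satMax F :=
      Finset.le_sup (f := fun τ : U → Bool => satCount F τ) (Finset.mem_univ _)
    omega
  · obtain ⟨τ, -, hτ⟩ := Finset.exists_mem_eq_sup (Finset.univ : Finset (U → Bool))
      Finset.univ_nonempty fun τ => satCount F τ
    have hc := satCount_eq e F hF1 hF2 τ
    have hmax : satMax F = satCount F τ := hτ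
    choose g hg using he
    refine ⟨(Finset.univ.filter fun x => τ x = false) ∪
      (Finset.univ.filter fun j => ¬ ∃ v ∈ e j, τ v = false).image g, fun j => ?_, ?_⟩
    · by_cases hj : ∃ v ∈ e j, τ v = false
      · obtain ⟨v, hv, hvτ⟩ := hj
        exact ⟨v, Finset.mem_union_left _ (by simpa using hvτ), hv⟩
      · exact ⟨g j, Finset.mem_union_right _ (Finset.mem_image_of_mem g
          (Finset.mem_filter.2 ⟨Finset.mem_univ _, hj⟩)), hg j⟩
    · have h1 := Finset.card_union_le (Finset.univ.filter fun x => τ x = false)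
        ((Finset.univ.filter fun j => ¬ ∃ v ∈ e j, τ v = false).image g)
      have h2 := Finset.card_image_le (f := g)
        (s := Finset.univ.filter fun j => ¬ ∃ v ∈ e j, τ v = false)
      omega
end
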